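/- Let 1 < p < 2. There is a constant c_p > 0 with the following property: for every finite family Δ_ν ⊂ 𝕋, ν = 1,…,N, of pairwise-disjoint intervals, and every family of functions f_ν ∈ A_p(𝕋) with supp f_ν ⊆ Δ_ν for each ν, one has ‖Σ_{ν=1}^N f_ν‖_{A_p(𝕋)}^p ≤ c_p · Σ_{ν=1}^N ‖f_ν‖_{A_p(𝕋)}^p. The constant c_p is independent of N and of the families {Δ_ν}, {f_ν}. -/

import Mathlib

open MeasureTheory Real Set
open scoped ENNReal

/-- The k-th Fourier coefficient of a (2π-periodic) function on the circle,
identified with a function on [0, 2π]. -/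
noncomputable def fourierCoef (f : ℝ → ℂ) (k : ℤ) : ℂ :=
  (1 / (2 * (Real.pi : ℂ))) *
    ∫ t in (0:ℝ)..(2 * Real.pi), f t * Complex.exp (-Complex.I * (k : ℂ) * (t : ℂ))

/-- The A_p(𝕋) norm: ℓ^p norm of the sequence of Fourier coefficients
(valued in ℝ≥0∞ so that divergence gives ∞). -/
noncomputable def ApNorm (p : ℝ) (f : ℝ → ℂ) : ℝ≥0∞ :=
  (∑' k : ℤ, ((‖fourierCoef f k‖₊ : ℝ≥0∞) ^ p)) ^ (1 / p)

/-!
Run a Calderón–Zygmund decomposition of each coefficient sequence at height `t`: on maximal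
dyadic blocks where its mean exceeds `t`, subtract an atom whose remainder is the orthogonal
projection onto `span {z ^ k, w ^ k}`, where `z` and `w` are the unimodular numbers given by the two
endpoints of `Δ_ν`. A Turán-type inequality bounds that projection by `t`, uniformly in `z` and `w`.
Cutting off to `Δ_ν` convolves an atom with the coefficients of the indicator, and vanishing of the
two moments gives quadratic decay away from its block. The good parts, cut off to disjoint sets, are
added without loss in `L²`. The resulting weak-type bound involves `min s s²` with
`s = ‖f_ν^(k)‖ / t`, which integrates against `t ^ (p - 1)` exactly because `1 < p < 2`.
-/

open Filter Topology
open scoped NNReal BoundedContinuousFunction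

lemma ae_eq_zero_of_forall_integral_boundedContinuous_smul_eq_zero {Ω E : Type*}
    [TopologicalSpace Ω] [HasOuterApproxClosed Ω] [MeasurableSpace Ω] [BorelSpace Ω]
    [NormedAddCommGroup E] [NormedSpace ℝ E] [CompleteSpace E] {μ : Measure Ω} {φ : Ω → E}
    (hφ : Integrable φ μ) (h : ∀ ψ : Ω →ᵇ ℝ≥0, ∫ x, (ψ x : ℝ) • φ x ∂μ = 0) : φ =ᵐ[μ] 0 := by
  refine ae_eq_zero_of_forall_setIntegral_isClosed_eq_zero hφ fun s hs => ?_
  have hlim : Tendsto (fun n => ∫ x, (hs.apprSeq n x : ℝ) • φ x ∂μ) atTop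
      (𝓝 (∫ x, s.indicator φ x ∂μ)) := by
    refine tendsto_integral_of_dominated_convergence (fun x => ‖φ x‖)
      (fun n => ?_) hφ.norm (fun n => ae_of_all _ fun x => ?_) (ae_of_all _ fun x => ?_)
    · exact ((hs.apprSeq n).continuous.measurable.coe_nnreal_real.aestronglyMeasurable).smul
        hφ.aestronglyMeasurable
    · rw [norm_smul, NNReal.norm_eq]
      exact mul_le_of_le_one_left (norm_nonneg _)
        (HasOuterApproxClosed.apprSeq_apply_le_one hs n x)
    · have happr := tendsto_pi_nhds.1 (HasOuterApproxClosed.tendsto_apprSeq hs) x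
      convert (NNReal.tendsto_coe.2 happr).smul_const (φ x) using 2
      by_cases hx : x ∈ s <;> simp [hx]
  simp only [h, integral_indicator hs.measurableSet] at hlim
  exact tendsto_nhds_unique hlim tendsto_const_nhds

section AddCircle

variable {T : ℝ} [Fact (0 < T)] {φ : AddCircle T → ℂ}

lemma integral_continuousMap_mul_eq_zero_of_fourierCoeff_eq_zero
    (hφ : Integrable φ AddCircle.haarAddCircle) (h : ∀ n, fourierCoeff φ n = 0)
    (ψ : C(AddCircle T, ℂ)) : ∫ x, ψ x * φ x ∂AddCircle.haarAddCircle = 0 := by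
  have hmul (ψ : C(AddCircle T, ℂ)) : Integrable (fun x => ψ x * φ x) AddCircle.haarAddCircle :=
    hφ.bdd_mul (c := ‖ψ‖) ψ.continuous.aestronglyMeasurable (ae_of_all _ ψ.norm_coe_le_norm)
  let pairing : C(AddCircle T, ℂ) →ₗ[ℂ] ℂ :=
    { toFun := fun ψ => ∫ x, ψ x * φ x ∂AddCircle.haarAddCircle
      map_add' := fun ψ₁ ψ₂ => by
        simp only [ContinuousMap.add_apply, add_mul, integral_add (hmul ψ₁) (hmul ψ₂)]
      map_smul' := fun c ψ => by
        simp only [ContinuousMap.smul_apply, smul_eq_mul, mul_assoc, RingHom.id_apply,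
          integral_const_mul] }
  let pairingL : C(AddCircle T, ℂ) →L[ℂ] ℂ :=
    pairing.mkContinuous (∫ x, ‖φ x‖ ∂AddCircle.haarAddCircle) fun ψ => by
      rw [← integral_mul_const]
      refine norm_integral_le_of_norm_le (hφ.norm.mul_const _) (ae_of_all _ fun x => ?_)
      rw [norm_mul, mul_comm]
      gcongr
      exact ψ.norm_coe_le_norm x
  have hker : (⊤ : Submodule ℂ C(AddCircle T, ℂ)) ≤ pairingL.ker := by
    rw [← span_fourier_closure_eq_top]
    refine Submodule.topologicalClosure_minimal _ (Submodule.span_le.2 ?_) pairingL.isClosed_ker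
    rintro _ ⟨n, rfl⟩
    have hn := h (-n)
    simp only [fourierCoeff, neg_neg, smul_eq_mul] at hn
    exact hn
  exact hker (Submodule.mem_top (x := ψ))

lemma ae_eq_zero_of_fourierCoeff_eq_zero (hφ : Integrable φ AddCircle.haarAddCircle)
    (h : ∀ n, fourierCoeff φ n = 0) : φ =ᵐ[AddCircle.haarAddCircle] 0 := by
  refine ae_eq_zero_of_forall_integral_boundedContinuous_smul_eq_zero hφ fun ψ => ?_
  simp only [Complex.real_smul]
  exact integral_continuousMap_mul_eq_zero_of_fourierCoeff_eq_zero hφ h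
    ⟨fun x => ((ψ x : ℝ) : ℂ), by fun_prop⟩

lemma memLp_two_of_summable_sq_fourierCoeff (hφ : Integrable φ AddCircle.haarAddCircle)
    (h : Summable fun n => ‖fourierCoeff φ n‖ ^ 2) : MemLp φ 2 AddCircle.haarAddCircle := by
  let F := (fourierBasis (T := T)).repr.symm
    ⟨fourierCoeff φ, memℓp_gen (by simpa only [ENNReal.toReal_ofNat, rpow_ofNat] using h)⟩
  have hF : MemLp F 2 AddCircle.haarAddCircle := Lp.memLp F
  have hcoeff (n : ℤ) : fourierCoeff F n = fourierCoeff φ n := by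
    rw [← fourierBasis_repr, LinearIsometryEquiv.apply_symm_apply]
  have hFi := (hF.integrable one_le_two).const_mul (-1)
  have hsub : φ + (fun x => -1 * F x) =ᵐ[AddCircle.haarAddCircle] 0 := by
    refine ae_eq_zero_of_fourierCoeff_eq_zero (hφ.add hFi) fun n => ?_
    rw [fourierCoeff.add hφ hFi, Pi.add_apply, fourierCoeff.const_mul, hcoeff, neg_one_mul,
      add_neg_cancel]
  refine hF.ae_eq (hsub.mono fun x hx => ?_)
  rw [Pi.add_apply, neg_one_mul, Pi.zero_apply] at hx
  exact (add_neg_eq_zero.1 hx).symm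

end AddCircle

section FourierCoef

variable {f g : ℝ → ℂ}

lemma fourierCoef_eq_fourierCoeffOn (f : ℝ → ℂ) (k : ℤ) :
    fourierCoef f k = fourierCoeffOn (a := 0) (b := 2 * π) (by positivity) f k := by
  have hchar (x : ℝ) : fourier (-k) (x : AddCircle (2 * π - 0)) • f x
      = f x * Complex.exp (-Complex.I * k * x) := by
    rw [fourier_coe_apply, smul_eq_mul, mul_comm]
    congr 2
    push_cast
    field_simp
    ring
  rw [fourierCoeffOn_eq_integral, fourierCoef]
  simp only [hchar, Complex.real_smul]
  push_cast
  simp only [sub_zero]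

lemma fourierCoef_eq_setIntegral (f : ℝ → ℂ) (n : ℤ) :
    fourierCoef f n = (1 / (2 * (π : ℂ))) *
      ∫ t in Ioc 0 (2 * π), f t * Complex.exp (-Complex.I * n * t) := by
  rw [fourierCoef, intervalIntegral.integral_of_le (by positivity)]

lemma integrableOn_mul_exp (hf : IntegrableOn f (Ioc 0 (2 * π))) (n : ℤ) :
    IntegrableOn (fun t => f t * Complex.exp (-Complex.I * n * t)) (Ioc 0 (2 * π)) := by
  refine hf.mul_bdd (c := 1) (by fun_prop) (ae_of_all _ fun t => ?_)
  simp [Complex.norm_exp]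

lemma fourierCoef_congr_ae (h : f =ᵐ[volume.restrict (Ioc 0 (2 * π))] g) (n : ℤ) :
    fourierCoef f n = fourierCoef g n := by
  rw [fourierCoef_eq_setIntegral, fourierCoef_eq_setIntegral]
  congr 1
  exact integral_congr_ae (h.mono fun t ht => by simp only [ht])

lemma fourierCoef_sub (hf : IntegrableOn f (Ioc 0 (2 * π)))
    (hg : IntegrableOn g (Ioc 0 (2 * π))) (n : ℤ) :
    fourierCoef (fun t => f t - g t) n = fourierCoef f n - fourierCoef g n := by
  simp only [fourierCoef_eq_setIntegral, sub_mul]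
  rw [integral_sub (integrableOn_mul_exp hf n) (integrableOn_mul_exp hg n), mul_sub]

lemma fourierCoef_const_mul (c : ℂ) (f : ℝ → ℂ) (n : ℤ) :
    fourierCoef (fun t => c * f t) n = c * fourierCoef f n := by
  simp only [fourierCoef_eq_setIntegral, mul_assoc, integral_const_mul]
  ring

lemma fourierCoef_sum {ι : Type*} {s : Finset ι} {f : ι → ℝ → ℂ}
    (hf : ∀ i ∈ s, IntegrableOn (f i) (Ioc 0 (2 * π))) (n : ℤ) :
    fourierCoef (fun t => ∑ i ∈ s, f i t) n = ∑ i ∈ s, fourierCoef (f i) n := by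
  simp only [fourierCoef_eq_setIntegral, Finset.sum_mul]
  rw [integral_finsetSum s fun i hi => integrableOn_mul_exp (hf i hi) n, Finset.mul_sum]

lemma memLp_two_of_summable_sq_fourierCoef (hf : IntegrableOn f (Ioc 0 (2 * π)))
    (h : Summable fun n => ‖fourierCoef f n‖ ^ 2) :
    MemLp f 2 (volume.restrict (Ioc 0 (2 * π))) := by
  have : Fact (0 < 2 * π) := ⟨by positivity⟩
  have hlift : Integrable (AddCircle.liftIoc (2 * π) 0 f) AddCircle.haarAddCircle := by
    rw [← memLp_one_iff_integrable]
    exact ((memLp_one_iff_integrable.2 (by rwa [zero_add])).memLp_liftIoc).haarAddCircle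
  have hcoeff (n : ℤ) : fourierCoeff (AddCircle.liftIoc (2 * π) 0 f) n = fourierCoef f n := by
    rw [fourierCoeff_liftIoc_eq, fourierCoef_eq_fourierCoeffOn]
    simp only [zero_add]
  have hlift₂ : MemLp (AddCircle.liftIoc (2 * π) 0 f) 2 :=
    (memLp_two_of_summable_sq_fourierCoeff hlift (by simpa only [hcoeff])).of_haarAddCircle
  have hpull := hlift₂.comp_measurePreserving (AddCircle.measurePreserving_mk (2 * π) 0)
  rw [zero_add] at hpull
  refine hpull.ae_eq ((ae_restrict_mem measurableSet_Ioc).mono fun x hx => ?_)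
  exact AddCircle.liftIoc_coe_apply (by rwa [zero_add])

lemma tsum_enorm_sq_fourierCoef (hf : IntegrableOn f (Ioc 0 (2 * π))) :
    ∑' n, ‖fourierCoef f n‖ₑ ^ 2 =
      ENNReal.ofReal (2 * π)⁻¹ * ∫⁻ t in Ioc 0 (2 * π), ‖f t‖ₑ ^ 2 := by
  have hsq (z : ℂ) : ‖z‖ₑ ^ 2 = ENNReal.ofReal (‖z‖ ^ 2) := by
    rw [ENNReal.ofReal_pow (norm_nonneg z), ofReal_norm]
  by_cases hf₂ : MemLp f 2 (volume.restrict (Ioc 0 (2 * π)))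
  · have hsum := hasSum_sq_fourierCoeffOn (a := 0) (b := 2 * π) (by positivity) hf₂
    simp only [← fourierCoef_eq_fourierCoeffOn, sub_zero, smul_eq_mul,
      intervalIntegral.integral_of_le two_pi_pos.le] at hsum
    simp only [hsq]
    rw [← ENNReal.ofReal_tsum_of_nonneg (fun n => by positivity) hsum.summable, hsum.tsum_eq,
      ENNReal.ofReal_mul (by positivity),
      ofReal_integral_eq_lintegral_ofReal hf₂.integrable_norm_pow'
        (ae_of_all _ fun t => by positivity)]
  · have hcoef : ∑' n, ‖fourierCoef f n‖ₑ ^ 2 = ⊤ := by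
      by_contra hfin
      refine hf₂ (memLp_two_of_summable_sq_fourierCoef hf ?_)
      simpa using ENNReal.summable_toReal hfin
    have hnorm : ∫⁻ t in Ioc 0 (2 * π), ‖f t‖ₑ ^ 2 = ⊤ := by
      by_contra hfin
      refine hf₂ ((memLp_two_iff_integrable_sq_norm hf.aestronglyMeasurable).2
        ⟨hf.aestronglyMeasurable.norm.pow 2, ?_⟩)
      simpa [hasFiniteIntegral_iff_enorm, lt_top_iff_ne_top] using hfin
    rw [hcoef, hnorm, ENNReal.mul_top (by simp [pi_pos])]

lemma tsum_enorm_sq_fourierCoef_sum_indicator_le {ι : Type*} [Fintype ι] {Δ : ι → Set ℝ}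
    (hΔ : ∀ ν, MeasurableSet (Δ ν)) (hdisj : Pairwise fun ν μ => Disjoint (Δ ν) (Δ μ))
    {G : ι → ℝ → ℂ} (hG : ∀ ν, IntegrableOn (G ν) (Ioc 0 (2 * π))) :
    ∑' n, ‖fourierCoef (fun t => ∑ ν, (Δ ν).indicator (G ν) t) n‖ₑ ^ 2 ≤
      ∑ ν, ∑' n, ‖fourierCoef (G ν) n‖ₑ ^ 2 := by
  have hpointwise (t : ℝ) : ‖∑ ν, (Δ ν).indicator (G ν) t‖ₑ ^ 2 ≤ ∑ ν, ‖G ν t‖ₑ ^ 2 := by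
    by_cases ht : ∃ ν, t ∈ Δ ν
    · obtain ⟨ν, hν⟩ := ht
      have hother (μ : ι) (hμ : μ ≠ ν) : (Δ μ).indicator (G μ) t = 0 :=
        indicator_of_notMem (fun h => (hdisj hμ).notMem_of_mem_left h hν) _
      rw [Fintype.sum_eq_single ν hother, indicator_of_mem hν]
      exact Finset.single_le_sum (f := fun ν => ‖G ν t‖ₑ ^ 2) (fun _ _ => zero_le)
        (Finset.mem_univ ν)
    · push Not at ht
      simp [ht]
  simp only [tsum_enorm_sq_fourierCoef (hG _)]
  rw [tsum_enorm_sq_fourierCoef (integrable_finsetSum _ fun ν _ => (hG ν).indicator (hΔ ν)),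
    ← Finset.mul_sum, ← lintegral_finsetSum' _ fun ν _ => (hG ν).aemeasurable.enorm.pow_const 2]
  gcongr with t
  exact hpointwise t

open scoped FourierTransform in
lemma tendsto_fourierCoef_cofinite (f : ℝ → ℂ) :
    Tendsto (fourierCoef f) cofinite (𝓝 0) := by
  have hfreq : Tendsto (fun n : ℤ => (n : ℝ) * (2 * π)⁻¹) cofinite (cocompact ℝ) :=
    ((Homeomorph.mulRight₀ (2 * π)⁻¹ (by positivity)).isClosedEmbedding.tendsto_cocompact).comp
      Int.tendsto_coe_cofinite
  have hlim := ((Real.tendsto_integral_exp_smul_cocompact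
    ((Ioc 0 (2 * π)).indicator f)).comp hfreq).const_mul (1 / (2 * (π : ℂ)))
  rw [mul_zero] at hlim
  refine hlim.congr fun n => ?_
  rw [fourierCoef_eq_setIntegral, ← integral_indicator measurableSet_Ioc, Function.comp_apply]
  congr 2 with t
  by_cases ht : t ∈ Ioc 0 (2 * π)
  · simp only [indicator_of_mem ht, Circle.smul_def, Real.fourierChar_apply, smul_eq_mul]
    rw [mul_comm]
    congr 2
    push_cast
    field_simp
  · simp only [indicator_of_notMem ht, smul_zero]

end FourierCoef

section Arc

/-- The Fourier coefficients of the indicator function of the arc `(a, b]`, which are the kernel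
of the multiplication by that indicator on the side of the coefficients. -/
noncomputable def arcCoef (a b : ℝ) (m : ℤ) : ℂ :=
  fourierCoef ((Ioc a b).indicator 1) m

/-- The trigonometric polynomial with coefficients `β` on the finite spectrum `s`. -/
noncomputable def trigPoly (s : Finset ℤ) (β : ℤ → ℂ) (t : ℝ) : ℂ :=
  ∑ k ∈ s, β k * Complex.exp (Complex.I * k * t)

variable {a b : ℝ}

lemma continuous_trigPoly (s : Finset ℤ) (β : ℤ → ℂ) : Continuous (trigPoly s β) := by
  unfold trigPoly
  fun_prop

lemma integrableOn_trigPoly (s : Finset ℤ) (β : ℤ → ℂ) :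
    IntegrableOn (trigPoly s β) (Ioc 0 (2 * π)) :=
  (continuous_trigPoly s β).integrableOn_Ioc

lemma fourierCoef_exp_mul (f : ℝ → ℂ) (k n : ℤ) :
    fourierCoef (fun t => Complex.exp (Complex.I * k * t) * f t) n = fourierCoef f (n - k) := by
  unfold fourierCoef
  congr 2 with t
  rw [mul_right_comm, mul_comm _ (f t), ← Complex.exp_add]
  congr 2
  push_cast
  ring

lemma fourierCoef_indicator_Ioc_trigPoly (s : Finset ℤ) (β : ℤ → ℂ) (n : ℤ) :
    fourierCoef ((Ioc a b).indicator (trigPoly s β)) n = ∑ k ∈ s, β k * arcCoef a b (n - k) := by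
  have hterm (k : ℤ) : Integrable
      (fun t : ℝ => β k * (Complex.exp (Complex.I * k * t) * (Ioc a b).indicator 1 t))
      (volume.restrict (Ioc 0 (2 * π))) := by
    refine Integrable.const_mul ?_ _
    refine Integrable.bdd_mul (c := 1) ?_ (by fun_prop) (ae_of_all _ fun t => ?_)
    · exact (integrableOn_const measure_Ioc_lt_top.ne).indicator measurableSet_Ioc
    · simp [Complex.norm_exp]
  have hexpand : (Ioc a b).indicator (trigPoly s β) = fun t : ℝ =>
      ∑ k ∈ s, β k * (Complex.exp (Complex.I * k * t) * (Ioc a b).indicator 1 t) := by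
    ext t
    by_cases ht : t ∈ Ioc a b <;> simp [trigPoly, ht]
  rw [hexpand, fourierCoef_sum fun k _ => hterm k]
  simp only [fourierCoef_const_mul, fourierCoef_exp_mul]
  rfl

lemma fourierCoef_indicator_Ioc_sum_trigPoly {κ : Type*} (B : Finset κ) (s : κ → Finset ℤ)
    (β : κ → ℤ → ℂ) (n : ℤ) :
    fourierCoef ((Ioc a b).indicator fun t => ∑ q ∈ B, trigPoly (s q) (β q) t) n =
      ∑ q ∈ B, ∑ k ∈ s q, β q k * arcCoef a b (n - k) := by
  have hsum : ((Ioc a b).indicator fun t => ∑ q ∈ B, trigPoly (s q) (β q) t) =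
      fun t => ∑ q ∈ B, (Ioc a b).indicator (trigPoly (s q) (β q)) t := by
    funext t
    by_cases ht : t ∈ Ioc a b
    · simp only [indicator_of_mem ht]
    · simp only [indicator_of_notMem ht, Finset.sum_const_zero]
  rw [hsum, fourierCoef_sum fun q _ => (integrableOn_trigPoly _ _).indicator measurableSet_Ioc]
  exact Finset.sum_congr rfl fun q _ => fourierCoef_indicator_Ioc_trigPoly _ _ n

lemma fourierCoef_indicator_Ioc (ha : 0 ≤ a) (hab : a ≤ b) (hb : b ≤ 2 * π) (f : ℝ → ℂ) (n : ℤ) :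
    fourierCoef ((Ioc a b).indicator f) n =
      1 / (2 * (π : ℂ)) * ∫ t in a..b, f t * Complex.exp (-Complex.I * n * t) := by
  rw [fourierCoef_eq_setIntegral, intervalIntegral.integral_of_le hab]
  simp only [← indicator_mul_left (Ioc a b) f fun t : ℝ => Complex.exp (-Complex.I * n * t)]
  rw [setIntegral_indicator measurableSet_Ioc, inter_eq_self_of_subset_right (Ioc_subset_Ioc ha hb)]

lemma arcCoef_of_ne_zero (ha : 0 ≤ a) (hab : a ≤ b) (hb : b ≤ 2 * π) {m : ℤ} (hm : m ≠ 0) :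
    arcCoef a b m = Complex.I / (2 * π) *
      (((Circle.exp (-b) : ℂ) ^ m - (Circle.exp (-a) : ℂ) ^ m) / m) := by
  have hm' : (m : ℂ) ≠ 0 := mod_cast hm
  have hexp (t : ℝ) : (Circle.exp (-t) : ℂ) ^ m = Complex.exp (-Complex.I * m * t) := by
    rw [Circle.coe_exp, ← Complex.exp_int_mul]
    congr 1
    push_cast
    ring
  rw [arcCoef, fourierCoef_indicator_Ioc ha hab hb]
  simp only [Pi.one_apply, one_mul]
  rw [integral_exp_mul_complex (mul_ne_zero (neg_ne_zero.2 Complex.I_ne_zero) hm'), hexp, hexp]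
  field_simp
  rw [Complex.I_sq]
  ring

lemma arcCoef_zero_two_pi (m : ℤ) : arcCoef 0 (2 * π) m = if m = 0 then 1 else 0 := by
  split_ifs with hm
  · rw [hm, arcCoef, fourierCoef_indicator_Ioc le_rfl two_pi_pos.le le_rfl]
    simp only [Pi.one_apply, Int.cast_zero, mul_zero, zero_mul, Complex.exp_zero, mul_one,
      intervalIntegral.integral_const, sub_zero, Complex.real_smul]
    push_cast
    field_simp
  · rw [arcCoef_of_ne_zero le_rfl two_pi_pos.le le_rfl hm]
    simp [Circle.exp_neg]

lemma fourierCoef_trigPoly {s : Finset ℤ} {β : ℤ → ℂ} (hβ : ∀ k ∉ s, β k = 0) (n : ℤ) :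
    fourierCoef (trigPoly s β) n = β n := by
  have hae : trigPoly s β =ᵐ[volume.restrict (Ioc 0 (2 * π))]
      (Ioc 0 (2 * π)).indicator (trigPoly s β) :=
    (ae_restrict_mem measurableSet_Ioc).mono fun t ht => (indicator_of_mem ht _).symm
  rw [fourierCoef_congr_ae hae, fourierCoef_indicator_Ioc_trigPoly]
  simp only [arcCoef_zero_two_pi, sub_eq_zero, mul_ite, mul_one, mul_zero, Finset.sum_ite_eq]
  exact ite_eq_left_iff.2 fun hn => (hβ n hn).symm

end Arc

section TwoFrequencies

lemma norm_starProjection_le_of_forall_norm_apply_le {𝕜 ι : Type*} [RCLike 𝕜] [Fintype ι]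
    (K : Submodule 𝕜 (EuclideanSpace 𝕜 ι)) [K.HasOrthogonalProjection] {A : ℝ}
    (hA : 0 ≤ A) (hK : ∀ v ∈ K, ∀ i, ‖v i‖ ≤ A * ‖v‖) (x : EuclideanSpace 𝕜 ι) :
    ‖K.starProjection x‖ ≤ A * ∑ i, ‖x i‖ := by
  rcases (norm_nonneg (K.starProjection x)).eq_or_lt with hzero | hpos
  · rw [← hzero]
    positivity
  · refine le_of_mul_le_mul_right ?_ hpos
    calc ‖K.starProjection x‖ * ‖K.starProjection x‖
        = RCLike.re (inner 𝕜 (K.starProjection x) x) := by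
          rw [K.re_inner_starProjection_eq_normSq, ← sq]; rfl
      _ ≤ ‖inner 𝕜 (K.starProjection x) x‖ := RCLike.re_le_norm _
      _ ≤ ∑ i, ‖x i‖ * ‖K.starProjection x i‖ := by
          rw [PiLp.inner_apply]
          refine (norm_sum_le _ _).trans_eq (Finset.sum_congr rfl fun i _ => ?_)
          rw [RCLike.inner_apply, norm_mul, RCLike.norm_conj]
      _ ≤ ∑ i, ‖x i‖ * (A * ‖K.starProjection x‖) := by
          gcongr with i
          exact hK _ (K.starProjection_apply_mem x) i
      _ = A * (∑ i, ‖x i‖) * ‖K.starProjection x‖ := by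
          rw [← Finset.sum_mul]
          ring

/-- The value at `k` of a combination of the two characters `k ↦ z ^ k` and `k ↦ w ^ k` of `ℤ`. -/
noncomputable def twoExp (z w : Circle) (α β : ℂ) (k : ℤ) : ℂ :=
  α * (z : ℂ) ^ k + β * (w : ℂ) ^ k

variable (z w : Circle) (α β : ℂ)

lemma norm_twoExp_le (k s : ℤ) :
    ‖twoExp z w α β k‖ ≤ 2 * ‖twoExp z w α β (k + s)‖ + ‖twoExp z w α β (k + 2 * s)‖ := by
  have hrec : twoExp z w α β k * ((z : ℂ) ^ s * (w : ℂ) ^ s) =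
      ((z : ℂ) ^ s + (w : ℂ) ^ s) * twoExp z w α β (k + s) - twoExp z w α β (k + 2 * s) := by
    simp only [twoExp, two_mul, ← add_assoc, zpow_add₀ z.coe_ne_zero, zpow_add₀ w.coe_ne_zero]
    ring
  have hsum : ‖(z : ℂ) ^ s + (w : ℂ) ^ s‖ ≤ 2 := by
    refine (norm_add_le _ _).trans_eq ?_
    simp only [norm_zpow, Circle.norm_coe, one_zpow]
    norm_num
  calc ‖twoExp z w α β k‖
      = ‖twoExp z w α β k * ((z : ℂ) ^ s * (w : ℂ) ^ s)‖ := by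
        simp only [norm_mul, norm_zpow, Circle.norm_coe, one_zpow, mul_one]
    _ ≤ ‖(z : ℂ) ^ s + (w : ℂ) ^ s‖ * ‖twoExp z w α β (k + s)‖
        + ‖twoExp z w α β (k + 2 * s)‖ := by
      rw [hrec, ← norm_mul]
      exact norm_sub_le _ _
    _ ≤ _ := by gcongr

lemma exists_progression_subset_Ico {c k : ℤ} {m : ℕ} (hk : k ∈ Finset.Ico c (c + m)) :
    ∃ ε : ℤ, ε ≠ 0 ∧ ∀ i < m / 4 + 1,
      k + ε * i ∈ Finset.Ico c (c + m) ∧ k + 2 * (ε * i) ∈ Finset.Ico c (c + m) := by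
  simp only [Finset.mem_Ico] at hk ⊢
  by_cases hhalf : 2 * (k - c) < m
  · exact ⟨1, by lia, by lia⟩
  · exact ⟨-1, by lia, by lia⟩

/-- A Turán–Nikolskii inequality: by `norm_twoExp_le`, a large value of `twoExp` is accompanied by
large values along a progression filling a fixed proportion of the block. -/
lemma card_mul_norm_sq_twoExp_le {c k : ℤ} {m : ℕ} (hk : k ∈ Finset.Ico c (c + m)) :
    m * ‖twoExp z w α β k‖ ^ 2 ≤ 40 * ∑ l ∈ Finset.Ico c (c + m), ‖twoExp z w α β l‖ ^ 2 := by
  obtain ⟨ε, hε, hmem⟩ := exists_progression_subset_Ico hk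
  set F := twoExp z w α β with hF
  have hstep (i : ℕ) : ‖F k‖ ^ 2 ≤ 8 * ‖F (k + ε * i)‖ ^ 2 + 2 * ‖F (k + 2 * (ε * i))‖ ^ 2 := by
    have hi := norm_twoExp_le z w α β k (ε * i)
    have hpos := norm_nonneg (F k)
    simp only [← hF] at hi
    nlinarith [sq_nonneg (2 * ‖F (k + ε * i)‖ - ‖F (k + 2 * (ε * i))‖)]
  have hsum (φ : ℕ → ℤ) (hφ : φ.Injective) (hmaps : ∀ i < m / 4 + 1, φ i ∈ Finset.Ico c (c + m)) :
      ∑ i ∈ Finset.range (m / 4 + 1), ‖F (φ i)‖ ^ 2 ≤ ∑ l ∈ Finset.Ico c (c + m), ‖F l‖ ^ 2 := by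
    rw [← Finset.sum_image (f := fun l => ‖F l‖ ^ 2) hφ.injOn]
    refine Finset.sum_le_sum_of_subset_of_nonneg (Finset.image_subset_iff.2 fun i hi => ?_)
      fun l _ _ => by positivity
    exact hmaps i (Finset.mem_range.1 hi)
  have hnear := hsum (fun i => k + ε * i) (fun i j => by simp [hε]) fun i hi => (hmem i hi).1
  have hfar := hsum (fun i => k + 2 * (ε * i)) (fun i j => by simp [hε]) fun i hi => (hmem i hi).2
  have htotal := Finset.sum_le_sum fun i (_ : i ∈ Finset.range (m / 4 + 1)) => hstep i
  rw [Finset.sum_add_distrib, ← Finset.mul_sum, ← Finset.mul_sum, Finset.sum_const,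
    Finset.card_range, nsmul_eq_mul] at htotal
  have hm : (m : ℝ) ≤ 4 * (m / 4 + 1 : ℕ) := by exact_mod_cast (by lia : m ≤ 4 * (m / 4 + 1))
  nlinarith [sq_nonneg ‖F k‖]

variable {z w α β} in
lemma norm_apply_le_of_eq_twoExp {c : ℤ} {m : ℕ} {v : EuclideanSpace ℂ (Finset.Ico c (c + m))}
    (hv : ∀ k, v k = twoExp z w α β k) (k : Finset.Ico c (c + m)) :
    ‖v k‖ ≤ √(40 / m) * ‖v‖ := by
  have hm : (0 : ℝ) < m := by
    have hk := Finset.mem_Ico.1 k.2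
    exact_mod_cast (by lia : 0 < m)
  refine le_of_sq_le_sq ?_ (by positivity)
  rw [mul_pow, sq_sqrt (by positivity), div_mul_eq_mul_div, le_div_iff₀' hm,
    EuclideanSpace.norm_sq_eq]
  simp only [hv]
  rw [Finset.sum_coe_sort (Finset.Ico c (c + m)) fun l => ‖twoExp z w α β l‖ ^ 2]
  exact card_mul_norm_sq_twoExp_le z w α β k.2

lemma exists_twoExp_sum_sub_mul_zpow_neg_eq_zero (g : ℤ → ℂ) (c : ℤ) (m : ℕ) :
    ∃ α β : ℂ,
      ∑ k ∈ Finset.Ico c (c + m), (g k - twoExp z w α β k) * (z : ℂ) ^ (-k) = 0 ∧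
      ∑ k ∈ Finset.Ico c (c + m), (g k - twoExp z w α β k) * (w : ℂ) ^ (-k) = 0 ∧
      m * ∑ k ∈ Finset.Ico c (c + m), ‖twoExp z w α β k‖ ^ 2 ≤
        40 * (∑ k ∈ Finset.Ico c (c + m), ‖g k‖) ^ 2 := by
  set I := Finset.Ico c (c + m)
  let char (u : Circle) : EuclideanSpace ℂ I := WithLp.toLp 2 fun k => (u : ℂ) ^ (k : ℤ)
  let G : EuclideanSpace ℂ I := WithLp.toLp 2 fun k => g k
  let K := Submodule.span ℂ {char z, char w}
  have hspan (v) (hv : v ∈ K) : ∃ α β : ℂ, ∀ k : I, v k = twoExp z w α β k := by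
    obtain ⟨α, β, rfl⟩ := Submodule.mem_span_pair.1 hv
    exact ⟨α, β, fun k => rfl⟩
  obtain ⟨α, β, hαβ⟩ := hspan _ (K.starProjection_apply_mem G)
  have hconj (u : Circle) (k : ℤ) : (starRingEnd ℂ) ((u : ℂ) ^ k) = (u : ℂ) ^ (-k) := by
    rw [map_zpow₀, ← Circle.coe_inv_eq_conj, Circle.coe_inv, inv_zpow']
  have hcancel (u : Circle) (hu : char u ∈ K) :
      ∑ k ∈ I, (g k - twoExp z w α β k) * (u : ℂ) ^ (-k) = 0 := by
    rw [← K.sub_starProjection_mem_orthogonal G _ hu, PiLp.inner_apply, ← Finset.sum_coe_sort I]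
    refine Finset.sum_congr rfl fun k _ => ?_
    rw [RCLike.inner_apply, PiLp.sub_apply, hαβ, hconj]
  refine ⟨α, β, hcancel z (Submodule.subset_span (by simp)),
    hcancel w (Submodule.subset_span (by simp)), ?_⟩
  have hnorm (v) (hv : v ∈ K) (k : I) : ‖v k‖ ≤ √(40 / m) * ‖v‖ := by
    obtain ⟨_, _, hv⟩ := hspan v hv
    exact norm_apply_le_of_eq_twoExp hv k
  have hproj := norm_starProjection_le_of_forall_norm_apply_le K (sqrt_nonneg _) hnorm G
  have hsq := pow_le_pow_left₀ (norm_nonneg _) hproj 2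
  rw [mul_pow, sq_sqrt (by positivity), EuclideanSpace.norm_sq_eq] at hsq
  simp only [hαβ] at hsq
  rw [Finset.sum_coe_sort I fun l => ‖twoExp z w α β l‖ ^ 2,
    Finset.sum_coe_sort I fun l => ‖g l‖] at hsq
  calc m * ∑ k ∈ I, ‖twoExp z w α β k‖ ^ 2
      ≤ m * (40 / m * (∑ k ∈ I, ‖g k‖) ^ 2) := by gcongr
    _ ≤ 40 * (∑ k ∈ I, ‖g k‖) ^ 2 := by
      rw [← mul_assoc, mul_div_left_comm]
      gcongr
      exact mul_le_of_le_one_right (by norm_num) (div_self_le_one _)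

end TwoFrequencies

section StoppingBlocks

/-- The block of `q.2` consecutive integers starting at `q.1`. -/
noncomputable def intBlock (q : ℤ × ℕ) : Finset ℤ :=
  Finset.Ico q.1 (q.1 + q.2)

/-- The dyadic block of length `2 ^ j` containing `k`. -/
def dyadicBlock (j : ℕ) (k : ℤ) : ℤ × ℕ :=
  (k / 2 ^ j * 2 ^ j, 2 ^ j)

lemma card_intBlock (q : ℤ × ℕ) : (intBlock q).card = q.2 := by
  simp [intBlock]

lemma mem_intBlock_dyadicBlock {j : ℕ} {k l : ℤ} :
    l ∈ intBlock (dyadicBlock j k) ↔ l / 2 ^ j = k / 2 ^ j := by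
  have hpos : (0 : ℤ) < 2 ^ j := by positivity
  rw [le_antisymm_iff, ← Int.lt_add_one_iff, Int.ediv_lt_iff_lt_mul hpos,
    Int.le_ediv_iff_mul_le hpos,
    and_comm, add_one_mul, intBlock, dyadicBlock, Finset.mem_Ico]
  push_cast
  rfl

lemma dyadicBlock_eq_of_mem {j : ℕ} {k l : ℤ} (h : l ∈ intBlock (dyadicBlock j k)) :
    dyadicBlock j l = dyadicBlock j k := by
  rw [dyadicBlock, mem_intBlock_dyadicBlock.1 h, dyadicBlock]

lemma intBlock_dyadicBlock_subset {i j : ℕ} (hij : i ≤ j) (k : ℤ) :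
    intBlock (dyadicBlock i k) ⊆ intBlock (dyadicBlock j k) := by
  intro l hl
  obtain ⟨d, rfl⟩ := Nat.exists_eq_add_of_le hij
  rw [mem_intBlock_dyadicBlock] at hl ⊢
  rw [pow_add, ← Int.ediv_ediv_of_nonneg (by positivity), hl,
    Int.ediv_ediv_of_nonneg (by positivity)]

variable {E : Type*} [SeminormedAddCommGroup E]

lemma exists_card_le_of_mul_card_lt_sum_norm {ι : Type*} {g : ι → E} {lam : ℝ}
    (hg : Tendsto g cofinite (𝓝 0)) (hlam : 0 < lam) :
    ∃ N : ℕ, ∀ I : Finset ι, lam * I.card < ∑ i ∈ I, ‖g i‖ → I.card ≤ N := by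
  classical
  have hfin : {i | ¬ ‖g i‖ < lam / 2}.Finite :=
    hg.norm.eventually_lt_const (by rw [norm_zero]; positivity)
  set F := hfin.toFinset with hF
  obtain ⟨N, hN⟩ := exists_nat_ge ((∑ i ∈ F, ‖g i‖) / (lam / 2))
  refine ⟨N, fun I hI => ?_⟩
  have hterm (i : ι) : ‖g i‖ ≤ lam / 2 + if i ∈ F then ‖g i‖ else 0 := by
    split_ifs with hi
    · linarith
    · simp only [hF, Finite.mem_toFinset, mem_ofPred_eq, not_not] at hi
      linarith
  have hsplit : ∑ i ∈ I, ‖g i‖ ≤ I.card * (lam / 2) + ∑ i ∈ F, ‖g i‖ := by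
    refine (Finset.sum_le_sum fun i _ => hterm i).trans ?_
    rw [Finset.sum_add_distrib, Finset.sum_const, nsmul_eq_mul, ← Finset.sum_filter]
    gcongr
    exact fun i hi => (Finset.mem_filter.1 hi).2
  rw [div_le_iff₀ (by positivity)] at hN
  have hcard : (I.card : ℝ) * (lam / 2) ≤ N * (lam / 2) := by linarith
  exact_mod_cast le_of_mul_le_mul_right hcard (by positivity)

/-- Block-average condition of the stopping-time argument: the mean of `‖g‖` on the block exceeds
`lam`. -/
def IsHeavy (g : ℤ → E) (lam : ℝ) (q : ℤ × ℕ) : Prop :=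
  lam * q.2 < ∑ l ∈ intBlock q, ‖g l‖

/-- A Calderón–Zygmund family for `g` at height `lam`: disjoint blocks on which the mean of `‖g‖`
is comparable to `lam`, off which `‖g‖` is at most `lam`. -/
structure IsStoppingFamily (g : ℤ → E) (lam : ℝ) (B : Finset (ℤ × ℕ)) : Prop where
  pos_of_mem : ∀ q ∈ B, 0 < q.2
  mul_le_sum : ∀ q ∈ B, lam * q.2 ≤ ∑ l ∈ intBlock q, ‖g l‖
  sum_le_mul : ∀ q ∈ B, ∑ l ∈ intBlock q, ‖g l‖ ≤ 2 * lam * q.2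
  pairwiseDisjoint : (B : Set (ℤ × ℕ)).PairwiseDisjoint intBlock
  norm_le : ∀ k, (∀ q ∈ B, k ∉ intBlock q) → ‖g k‖ ≤ lam

variable {g : ℤ → E} {lam : ℝ}

lemma finite_setOf_isHeavy_dyadicBlock (hg : Tendsto g cofinite (𝓝 0)) (hlam : 0 < lam) :
    {p : ℕ × ℤ | IsHeavy g lam (dyadicBlock p.1 p.2)}.Finite := by
  obtain ⟨N, hN⟩ := exists_card_le_of_mul_card_lt_sum_norm hg hlam
  have hlarge : {l | ¬ ‖g l‖ < lam}.Finite :=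
    hg.norm.eventually_lt_const (by rwa [norm_zero])
  refine (((Finset.range (N + 1)).finite_toSet).biUnion fun j _ => hlarge.biUnion fun l _ =>
    ((finite_singleton j).prod (intBlock (dyadicBlock j l)).finite_toSet)).subset ?_
  rintro ⟨j, k⟩ (hheavy : IsHeavy g lam (dyadicBlock j k))
  rw [IsHeavy, ← card_intBlock] at hheavy
  have hj : j < N + 1 := by
    have hcard := hN _ hheavy
    rw [card_intBlock] at hcard
    exact Nat.lt_succ_of_lt (Nat.lt_two_pow_self.trans_le hcard)
  obtain ⟨l, hl, hgl⟩ : ∃ l ∈ intBlock (dyadicBlock j k), lam < ‖g l‖ := by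
    refine Finset.exists_lt_of_sum_lt ?_
    rwa [Finset.sum_const, nsmul_eq_mul, mul_comm]
  simp only [mem_iUnion, mem_prod, mem_singleton_iff, exists_prop]
  refine ⟨j, by simpa using hj, l, not_lt.2 hgl.le, rfl, ?_⟩
  exact Finset.mem_coe.2 (mem_intBlock_dyadicBlock.2 (mem_intBlock_dyadicBlock.1 hl).symm)

/-- Maximality of the scale `j` among the heavy dyadic blocks containing `k`. -/
def IsMaximalHeavy (g : ℤ → E) (lam : ℝ) (j : ℕ) (k : ℤ) : Prop :=
  IsHeavy g lam (dyadicBlock j k) ∧ ∀ i, j < i → ¬ IsHeavy g lam (dyadicBlock i k)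

lemma scale_le_of_isMaximalHeavy {i j : ℕ} {k l n : ℤ} (hk : IsMaximalHeavy g lam i k)
    (hl : IsMaximalHeavy g lam j l) (hnk : n ∈ intBlock (dyadicBlock i k))
    (hnl : n ∈ intBlock (dyadicBlock j l)) : i ≤ j := by
  by_contra! hlt
  refine hl.2 i hlt ?_
  rw [← dyadicBlock_eq_of_mem (intBlock_dyadicBlock_subset hlt.le l hnl), dyadicBlock_eq_of_mem hnk]
  exact hk.1

lemma dyadicBlock_eq_of_isMaximalHeavy {i j : ℕ} {k l n : ℤ} (hk : IsMaximalHeavy g lam i k)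
    (hl : IsMaximalHeavy g lam j l) (hnk : n ∈ intBlock (dyadicBlock i k))
    (hnl : n ∈ intBlock (dyadicBlock j l)) : dyadicBlock i k = dyadicBlock j l := by
  obtain rfl : i = j := le_antisymm (scale_le_of_isMaximalHeavy hk hl hnk hnl)
    (scale_le_of_isMaximalHeavy hl hk hnl hnk)
  rw [← dyadicBlock_eq_of_mem hnk, dyadicBlock_eq_of_mem hnl]

lemma exists_isMaximalHeavy (hg : Tendsto g cofinite (𝓝 0)) (hlam : 0 < lam) {k : ℤ}
    (hk : lam < ‖g k‖) : ∃ j, IsMaximalHeavy g lam j k := by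
  have hfin : {j | IsHeavy g lam (dyadicBlock j k)}.Finite :=
    (finite_setOf_isHeavy_dyadicBlock hg hlam).preimage
      (f := fun j => (j, k)) fun i _ j _ hij => congrArg Prod.fst hij
  have hzero : IsHeavy g lam (dyadicBlock 0 k) := by
    simpa [IsHeavy, dyadicBlock, intBlock, Finset.Ico_add_one_right_eq_Icc] using hk
  obtain ⟨j, hj, hmax⟩ := exists_max_image _ id hfin ⟨0, hzero⟩
  exact ⟨j, hj, fun i hji hi => (hmax i hi).not_gt hji⟩

theorem exists_isStoppingFamily (hg : Tendsto g cofinite (𝓝 0)) (hlam : 0 < lam) :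
    ∃ B, IsStoppingFamily g lam B := by
  classical
  have hfin : {p : ℕ × ℤ | IsMaximalHeavy g lam p.1 p.2}.Finite :=
    (finite_setOf_isHeavy_dyadicBlock hg hlam).subset fun p hp => hp.1
  set B := hfin.toFinset.image fun p => dyadicBlock p.1 p.2 with hB
  have hmem {q : ℤ × ℕ} : q ∈ B ↔ ∃ j k, IsMaximalHeavy g lam j k ∧ dyadicBlock j k = q := by
    simp [hB]
  refine ⟨B, ?_, ?_, ?_, ?_, ?_⟩
  · intro q hq
    obtain ⟨j, k, -, rfl⟩ := hmem.1 hq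
    exact pow_pos two_pos j
  · intro q hq
    obtain ⟨j, k, hjk, rfl⟩ := hmem.1 hq
    exact hjk.1.le
  · intro q hq
    obtain ⟨j, k, hjk, rfl⟩ := hmem.1 hq
    have hparent := not_lt.1 (hjk.2 (j + 1) (lt_add_one j))
    calc ∑ l ∈ intBlock (dyadicBlock j k), ‖g l‖
        ≤ ∑ l ∈ intBlock (dyadicBlock (j + 1) k), ‖g l‖ :=
          Finset.sum_le_sum_of_subset_of_nonneg (intBlock_dyadicBlock_subset (Nat.le_succ j) k)
            fun _ _ _ => norm_nonneg _
      _ ≤ lam * (dyadicBlock (j + 1) k).2 := hparent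
      _ = 2 * lam * (dyadicBlock j k).2 := by
          simp only [dyadicBlock]
          push_cast
          ring
  · intro q hq q' hq' hne
    obtain ⟨i, k, hk, rfl⟩ := hmem.1 hq
    obtain ⟨j, l, hl, rfl⟩ := hmem.1 hq'
    exact Finset.disjoint_left.2 fun n hnk hnl =>
      hne (dyadicBlock_eq_of_isMaximalHeavy hk hl hnk hnl)
  · intro k hk
    by_contra! hlt
    obtain ⟨j, hj⟩ := exists_isMaximalHeavy hg hlam hlt
    exact hk _ (hmem.2 ⟨j, k, hj, rfl⟩) (mem_intBlock_dyadicBlock.2 rfl)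

end StoppingBlocks

section LinQuad

/-- The comparison function `min s s²`, which measures the size of a Calderón–Zygmund
decomposition at height one. -/
noncomputable def linQuad (s : ℝ) : ℝ :=
  min s (s ^ 2)

lemma linQuad_of_le_one {s : ℝ} (hs : 0 ≤ s) (hs₁ : s ≤ 1) : linQuad s = s ^ 2 :=
  min_eq_right (by nlinarith)

lemma linQuad_of_one_le {s : ℝ} (hs : 1 ≤ s) : linQuad s = s :=
  min_eq_left (by nlinarith)

lemma le_half_add_two_mul_linQuad {s : ℝ} (hs : 0 ≤ s) : s ≤ 1 / 2 + 2 * linQuad s := by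
  rcases le_total s 1 with h | h
  · rw [linQuad_of_le_one hs h]
    nlinarith [sq_nonneg (s - 1 / 4)]
  · rw [linQuad_of_one_le h]
    linarith

/-- The functional `∑ min (‖g k‖ / lam) (‖g k‖ / lam)²` governing the Calderón–Zygmund
decomposition of `g` at height `lam`. -/
noncomputable def czEnergy {ι E : Type*} [Norm E] (lam : ℝ) (g : ι → E) : ℝ≥0∞ :=
  ∑' k, ENNReal.ofReal (linQuad (‖g k‖ / lam))

end LinQuad

section AtomicDecomposition

namespace IsStoppingFamily

variable {E : Type*} [SeminormedAddCommGroup E] {g : ℤ → E} {lam : ℝ} {B : Finset (ℤ × ℕ)}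

lemma natCast_le_four_mul_sum (hB : IsStoppingFamily g lam B) (hlam : 0 < lam) {q : ℤ × ℕ}
    (hq : q ∈ B) : (q.2 : ℝ) ≤ 4 * ∑ k ∈ intBlock q, linQuad (‖g k‖ / lam) := by
  have hmean : (q.2 : ℝ) ≤ ∑ k ∈ intBlock q, ‖g k‖ / lam := by
    rw [← Finset.sum_div, le_div_iff₀' hlam]
    exact hB.mul_le_sum q hq
  have hsplit := Finset.sum_le_sum fun k (_ : k ∈ intBlock q) =>
    le_half_add_two_mul_linQuad (s := ‖g k‖ / lam) (by positivity)
  rw [Finset.sum_add_distrib, Finset.sum_const, card_intBlock, nsmul_eq_mul,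
    ← Finset.mul_sum] at hsplit
  linarith

lemma sum_card_le (hB : IsStoppingFamily g lam B) (hlam : 0 < lam) :
    ∑ q ∈ B, (q.2 : ℝ≥0∞) ≤ 4 * czEnergy lam g := by
  classical
  have hblock (q) (hq : q ∈ B) :
      (q.2 : ℝ≥0∞) ≤ 4 * ∑ k ∈ intBlock q, ENNReal.ofReal (linQuad (‖g k‖ / lam)) := by
    have h := ENNReal.ofReal_le_ofReal (hB.natCast_le_four_mul_sum hlam hq)
    rwa [ENNReal.ofReal_natCast, ENNReal.ofReal_mul zero_le_four, ENNReal.ofReal_ofNat,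
      ENNReal.ofReal_sum_of_nonneg fun k _ => ?_] at h
    unfold linQuad
    positivity
  calc ∑ q ∈ B, (q.2 : ℝ≥0∞)
      ≤ ∑ q ∈ B, 4 * ∑ k ∈ intBlock q, ENNReal.ofReal (linQuad (‖g k‖ / lam)) :=
        Finset.sum_le_sum hblock
    _ = 4 * ∑ k ∈ B.biUnion intBlock, ENNReal.ofReal (linQuad (‖g k‖ / lam)) := by
        rw [← Finset.mul_sum, Finset.sum_biUnion hB.pairwiseDisjoint]
    _ ≤ 4 * czEnergy lam g := by
        gcongr
        exact ENNReal.sum_le_tsum _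

lemma enorm_sq_sub_sum_le (hB : IsStoppingFamily g lam B) (hlam : 0 < lam)
    {β : ℤ × ℕ → ℤ → E} (hβ : ∀ q ∈ B, ∀ k ∉ intBlock q, β q k = 0) (n : ℤ) :
    ‖g n - ∑ q ∈ B, β q n‖ₑ ^ 2 ≤
      ENNReal.ofReal (lam ^ 2) * ENNReal.ofReal (linQuad (‖g n‖ / lam)) +
        ∑ q ∈ B, (intBlock q : Set ℤ).indicator (fun k => ‖g k - β q k‖ₑ ^ 2) n := by
  by_cases hn : ∃ q ∈ B, n ∈ intBlock q
  · obtain ⟨q, hq, hnq⟩ := hn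
    rw [Finset.sum_eq_single_of_mem q hq fun q' hq' hne => hβ q' hq' n fun hnq' =>
      Finset.disjoint_left.1 (hB.pairwiseDisjoint hq' hq hne) hnq' hnq]
    refine le_add_left (le_trans ?_ (Finset.single_le_sum (fun _ _ => zero_le) hq))
    rw [indicator_of_mem (Finset.mem_coe.2 hnq)]
  · push Not at hn
    rw [Finset.sum_eq_zero fun q hq => hβ q hq n (hn q hq), sub_zero]
    refine le_add_right (le_of_eq ?_)
    rw [linQuad_of_le_one (by positivity) (div_le_one_of_le₀ (hB.norm_le n hn) hlam.le),
      ← ENNReal.ofReal_mul (by positivity), ← mul_pow, mul_div_cancel₀ _ hlam.ne',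
      ENNReal.ofReal_pow (norm_nonneg _), ofReal_norm]

lemma tsum_enorm_sq_sub_sum_le (hB : IsStoppingFamily g lam B) (hlam : 0 < lam)
    {β : ℤ × ℕ → ℤ → E} (hβ : ∀ q ∈ B, ∀ k ∉ intBlock q, β q k = 0)
    (hsq : ∀ q ∈ B, ∑ k ∈ intBlock q, ‖g k - β q k‖ ^ 2 ≤ 160 * lam ^ 2 * q.2) :
    ∑' n, ‖g n - ∑ q ∈ B, β q n‖ₑ ^ 2 ≤ ENNReal.ofReal (641 * lam ^ 2) * czEnergy lam g := by
  have hblock (q) (hq : q ∈ B) :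
      ∑' n, (intBlock q : Set ℤ).indicator (fun k => ‖g k - β q k‖ₑ ^ 2) n ≤
        ENNReal.ofReal (160 * lam ^ 2) * q.2 := by
    rw [← tsum_subtype, Finset.tsum_subtype' _ fun k => ‖g k - β q k‖ₑ ^ 2]
    simp only [← ofReal_norm, ← ENNReal.ofReal_pow (norm_nonneg _)]
    rw [← ENNReal.ofReal_sum_of_nonneg fun k _ => by positivity, ← ENNReal.ofReal_natCast,
      ← ENNReal.ofReal_mul (by positivity)]
    exact ENNReal.ofReal_le_ofReal (hsq q hq)
  calc ∑' n, ‖g n - ∑ q ∈ B, β q n‖ₑ ^ 2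
      ≤ ENNReal.ofReal (lam ^ 2) * czEnergy lam g + ∑ q ∈ B, ∑' n,
          (intBlock q : Set ℤ).indicator (fun k => ‖g k - β q k‖ₑ ^ 2) n := by
        refine (ENNReal.tsum_le_tsum (hB.enorm_sq_sub_sum_le hlam hβ)).trans_eq ?_
        rw [ENNReal.tsum_add, ENNReal.tsum_mul_left, czEnergy,
          Summable.tsum_finsetSum fun _ _ => ENNReal.summable]
    _ ≤ ENNReal.ofReal (lam ^ 2) * czEnergy lam g +
          ENNReal.ofReal (160 * lam ^ 2) * (4 * czEnergy lam g) := by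
        refine add_le_add_right ((Finset.sum_le_sum hblock).trans ?_) _
        rw [← Finset.mul_sum]
        gcongr
        exact hB.sum_card_le hlam
    _ = ENNReal.ofReal (641 * lam ^ 2) * czEnergy lam g := by
        rw [← mul_assoc, ← add_mul, ← ENNReal.ofReal_ofNat 4, ← ENNReal.ofReal_mul (by positivity),
          ← ENNReal.ofReal_add (by positivity) (by positivity)]
        congr 2
        ring

end IsStoppingFamily

/-- A sequence supported on the block `q`, of mean size at most `A` there, and orthogonal to both
characters `k ↦ z ^ k` and `k ↦ w ^ k` of `ℤ`. -/
structure IsCancellingAtom (z w : Circle) (A : ℝ) (q : ℤ × ℕ) (β : ℤ → ℂ) : Prop where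
  eq_zero : ∀ k ∉ intBlock q, β k = 0
  sum_mul_left : ∑ k ∈ intBlock q, β k * (z : ℂ) ^ (-k) = 0
  sum_mul_right : ∑ k ∈ intBlock q, β k * (w : ℂ) ^ (-k) = 0
  sum_norm_le : ∑ k ∈ intBlock q, ‖β k‖ ≤ A * q.2

lemma exists_isCancellingAtom (z w : Circle) {g : ℤ → ℂ} {D : ℝ} {q : ℤ × ℕ} (hq : 0 < q.2)
    (hg : ∑ k ∈ intBlock q, ‖g k‖ ≤ D * q.2) :
    ∃ β, IsCancellingAtom z w (8 * D) q β ∧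
      ∑ k ∈ intBlock q, ‖g k - β k‖ ^ 2 ≤ 40 * D ^ 2 * q.2 := by
  classical
  obtain ⟨a, b, hz, hw, hab⟩ := exists_twoExp_sum_sub_mul_zpow_neg_eq_zero z w g q.1 q.2
  change ∑ k ∈ intBlock q, _ = 0 at hz hw
  change _ * ∑ k ∈ intBlock q, _ ≤ 40 * (∑ k ∈ intBlock q, _) ^ 2 at hab
  have hm : (0 : ℝ) < q.2 := mod_cast hq
  have hD : 0 ≤ D := nonneg_of_mul_nonneg_left ((by positivity : (0 : ℝ) ≤ _).trans hg) hm
  have hsq : ∑ k ∈ intBlock q, ‖twoExp z w a b k‖ ^ 2 ≤ 40 * D ^ 2 * q.2 := by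
    refine le_of_mul_le_mul_left ?_ hm
    calc (q.2 : ℝ) * ∑ k ∈ intBlock q, ‖twoExp z w a b k‖ ^ 2
        ≤ 40 * (D * q.2) ^ 2 := hab.trans (by gcongr)
      _ = q.2 * (40 * D ^ 2 * q.2) := by ring
  have hsum : ∑ k ∈ intBlock q, ‖twoExp z w a b k‖ ≤ 7 * D * q.2 := by
    refine le_of_sq_le_sq ?_ (by positivity)
    calc (∑ k ∈ intBlock q, ‖twoExp z w a b k‖) ^ 2
        ≤ q.2 * ∑ k ∈ intBlock q, ‖twoExp z w a b k‖ ^ 2 := by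
          rw [← card_intBlock]
          exact sq_sum_le_card_mul_sum_sq
      _ ≤ q.2 * (40 * D ^ 2 * q.2) := by gcongr
      _ ≤ (7 * D * q.2) ^ 2 := by nlinarith [sq_nonneg (D * q.2)]
  set β : ℤ → ℂ := fun k => if k ∈ intBlock q then g k - twoExp z w a b k else 0
  have hβ {k} (hk : k ∈ intBlock q) : β k = g k - twoExp z w a b k := if_pos hk
  refine ⟨β, ⟨fun k hk => if_neg hk, ?_, ?_, ?_⟩, ?_⟩
  · rw [← hz, Finset.sum_congr rfl fun k hk => by rw [hβ hk]]
  · rw [← hw, Finset.sum_congr rfl fun k hk => by rw [hβ hk]]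
  · calc ∑ k ∈ intBlock q, ‖β k‖
        ≤ ∑ k ∈ intBlock q, (‖g k‖ + ‖twoExp z w a b k‖) :=
          Finset.sum_le_sum fun k hk => by rw [hβ hk]; exact norm_sub_le _ _
      _ ≤ 8 * D * q.2 := by
          rw [Finset.sum_add_distrib]
          linarith
  · refine le_trans (le_of_eq (Finset.sum_congr rfl fun k hk => ?_)) hsq
    rw [hβ hk, sub_sub_cancel]

theorem exists_atomic_decomposition (z w : Circle) {g : ℤ → ℂ} {lam : ℝ}
    (hg : Tendsto g cofinite (𝓝 0)) (hlam : 0 < lam) :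
    ∃ (B : Finset (ℤ × ℕ)) (β : ℤ × ℕ → ℤ → ℂ),
      (∀ q ∈ B, 0 < q.2 ∧ IsCancellingAtom z w (16 * lam) q (β q)) ∧
      ∑ q ∈ B, (q.2 : ℝ≥0∞) ≤ 4 * czEnergy lam g ∧
      ∑' n, ‖g n - ∑ q ∈ B, β q n‖ₑ ^ 2 ≤ ENNReal.ofReal (641 * lam ^ 2) * czEnergy lam g := by
  obtain ⟨B, hB⟩ := exists_isStoppingFamily hg hlam
  choose! β hatom hsq using fun q hq =>
    exists_isCancellingAtom z w (hB.pos_of_mem q hq) (hB.sum_le_mul q hq)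
  refine ⟨B, β, fun q hq => ⟨hB.pos_of_mem q hq, ?_⟩, hB.sum_card_le hlam,
    hB.tsum_enorm_sq_sub_sum_le hlam (fun q hq => (hatom q hq).eq_zero) fun q hq => ?_⟩
  · convert hatom q hq using 1
    ring
  · refine (hsq q hq).trans_eq ?_
    ring

end AtomicDecomposition

section AtomTails

lemma abs_sub_le_two_mul_abs_sub {c k n : ℤ} {m : ℕ} (hk : k ∈ Finset.Ico c (c + m))
    (hn : 2 * m ≤ |n - c|) : |n - c| ≤ 2 * |n - k| := by
  have hkc : |k - c| ≤ m := by
    rw [Finset.mem_Ico] at hk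
    rw [abs_of_nonneg] <;> lia
  have htriangle := abs_sub_le n k c
  lia

lemma sub_ne_zero_of_two_mul_le_abs_sub {c k n : ℤ} {m : ℕ} (hk : k ∈ Finset.Ico c (c + m))
    (hn : 2 * m ≤ |n - c|) : n - k ≠ 0 := by
  have hle := abs_sub_le_two_mul_abs_sub hk hn
  rw [Finset.mem_Ico] at hk
  rw [← abs_pos]
  lia

lemma norm_inv_sub_inv_le {c k n : ℤ} {m : ℕ} (hk : k ∈ Finset.Ico c (c + m))
    (hn : 2 * m ≤ |n - c|) :
    ‖((n - k : ℤ) : ℂ)⁻¹ - ((n - c : ℤ) : ℂ)⁻¹‖ ≤ 2 * m / (n - c : ℤ) ^ 2 := by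
  have hden : (|((n - c : ℤ) : ℝ)|) ≤ 2 * |((n - k : ℤ) : ℝ)| :=
    mod_cast abs_sub_le_two_mul_abs_sub hk hn
  have hk₀ := sub_ne_zero_of_two_mul_le_abs_sub hk hn
  rw [Finset.mem_Ico] at hk
  have hc₀ : n - c ≠ 0 := abs_pos.1 (by lia)
  have hnum : |((k - c : ℤ) : ℝ)| ≤ m := by
    rw [abs_of_nonneg (mod_cast (by lia : 0 ≤ k - c))]
    exact_mod_cast (by lia : k - c ≤ m)
  have : 0 < |((n - c : ℤ) : ℝ)| := abs_pos.2 (mod_cast hc₀)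
  have : 0 < |((n - k : ℤ) : ℝ)| := abs_pos.2 (mod_cast hk₀)
  have hdiff : ((n - k : ℤ) : ℂ)⁻¹ - ((n - c : ℤ) : ℂ)⁻¹ =
      (k - c : ℤ) / ((n - k : ℤ) * (n - c : ℤ)) := by
    rw [inv_sub_inv (mod_cast hk₀) (mod_cast hc₀)]
    push_cast
    ring
  rw [hdiff, norm_div, norm_mul, Complex.norm_intCast, Complex.norm_intCast, Complex.norm_intCast,
    ← sq_abs (_ : ℝ), div_le_div_iff₀ (by positivity) (by positivity)]
  calc |((k - c : ℤ) : ℝ)| * |((n - c : ℤ) : ℝ)| ^ 2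
      ≤ m * (|((n - c : ℤ) : ℝ)| * (2 * |((n - k : ℤ) : ℝ)|)) := by
        rw [sq]
        gcongr
    _ = 2 * m * (|((n - k : ℤ) : ℝ)| * |((n - c : ℤ) : ℝ)|) := by ring

lemma norm_sum_mul_zpow_div_le {z : Circle} {β : ℤ → ℂ} {c n : ℤ} {m : ℕ}
    (hβ : ∑ k ∈ Finset.Ico c (c + m), β k * (z : ℂ) ^ (-k) = 0) (hn : 2 * m ≤ |n - c|) :
    ‖∑ k ∈ Finset.Ico c (c + m), β k * ((z : ℂ) ^ (n - k) / (n - k : ℤ))‖ ≤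
      2 * m / (n - c : ℤ) ^ 2 * ∑ k ∈ Finset.Ico c (c + m), ‖β k‖ := by
  have hshift : ∑ k ∈ Finset.Ico c (c + m), β k * ((z : ℂ) ^ (n - k) / (n - k : ℤ)) =
      ∑ k ∈ Finset.Ico c (c + m),
        β k * (z : ℂ) ^ (n - k) * (((n - k : ℤ) : ℂ)⁻¹ - ((n - c : ℤ) : ℂ)⁻¹) := by
    have hzero : ∑ k ∈ Finset.Ico c (c + m), β k * (z : ℂ) ^ (n - k) * ((n - c : ℤ) : ℂ)⁻¹ = 0 := by
      simp only [sub_eq_add_neg n, zpow_add₀ z.coe_ne_zero, mul_left_comm (β _),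
        mul_assoc ((z : ℂ) ^ n)]
      rw [← Finset.mul_sum, ← Finset.sum_mul, hβ, zero_mul, mul_zero]
    simp only [mul_sub, Finset.sum_sub_distrib, hzero, sub_zero]
    exact Finset.sum_congr rfl fun k _ => by ring
  rw [hshift, Finset.mul_sum]
  refine (norm_sum_le _ _).trans (Finset.sum_le_sum fun k hk => ?_)
  rw [norm_mul, norm_mul, norm_zpow, Circle.norm_coe, one_zpow, mul_one, mul_comm]
  gcongr
  exact norm_inv_sub_inv_le hk hn

lemma IsCancellingAtom.norm_sum_mul_arcCoef_le {a b A : ℝ} {q : ℤ × ℕ} {β : ℤ → ℂ}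
    (hβ : IsCancellingAtom (Circle.exp (-a)) (Circle.exp (-b)) A q β) (ha : 0 ≤ a) (hab : a ≤ b)
    (hb : b ≤ 2 * π) (hq : 0 < q.2) {n : ℤ} (hn : 2 * q.2 ≤ |n - q.1|) :
    ‖∑ k ∈ intBlock q, β k * arcCoef a b (n - k)‖ ≤ A / (((n - q.1 : ℤ) : ℝ) / q.2) ^ 2 := by
  have hleft := norm_sum_mul_zpow_div_le hβ.sum_mul_left hn
  have hright := norm_sum_mul_zpow_div_le hβ.sum_mul_right hn
  have hsplit : ∑ k ∈ intBlock q, β k * arcCoef a b (n - k) = Complex.I / (2 * π) *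
      (∑ k ∈ intBlock q, β k * ((Circle.exp (-b) : ℂ) ^ (n - k) / (n - k : ℤ)) -
        ∑ k ∈ intBlock q, β k * ((Circle.exp (-a) : ℂ) ^ (n - k) / (n - k : ℤ))) := by
    rw [← Finset.sum_sub_distrib, Finset.mul_sum]
    refine Finset.sum_congr rfl fun k hk => ?_
    rw [arcCoef_of_ne_zero ha hab hb (sub_ne_zero_of_two_mul_le_abs_sub hk hn)]
    ring
  have hconst : ‖Complex.I / (2 * π)‖ ≤ 1 / 4 := by
    rw [norm_div, Complex.norm_I, norm_mul, Complex.norm_ofNat, Complex.norm_of_nonneg pi_pos.le]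
    gcongr
    linarith [two_le_pi]
  have : (0 : ℝ) < q.2 := mod_cast hq
  rw [hsplit, norm_mul]
  calc ‖Complex.I / (2 * π)‖ * ‖_ - _‖
      ≤ 1 / 4 * (2 * (2 * q.2 / (n - q.1 : ℤ) ^ 2 * ∑ k ∈ intBlock q, ‖β k‖)) := by
        gcongr
        rw [two_mul (_ * _)]
        exact (norm_sub_le _ _).trans (add_le_add hright hleft)
    _ ≤ 1 / 4 * (2 * (2 * q.2 / (n - q.1 : ℤ) ^ 2 * (A * q.2))) := by
        gcongr
        exact hβ.sum_norm_le
    _ = A / (((n - q.1 : ℤ) : ℝ) / q.2) ^ 2 := by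
        field_simp
        ring

lemma IsCancellingAtom.min_one_enorm_sum_mul_arcCoef_le {a b lam : ℝ} {q : ℤ × ℕ} {β : ℤ → ℂ}
    (hβ : IsCancellingAtom (Circle.exp (-a)) (Circle.exp (-b)) (16 * lam) q β) (hlam : 0 < lam)
    (ha : 0 ≤ a) (hab : a ≤ b) (hb : b ≤ 2 * π) (hq : 0 < q.2) (n : ℤ) :
    min 1 (‖∑ k ∈ intBlock q, β k * arcCoef a b (n - k)‖ₑ / ENNReal.ofReal (lam / 2)) ≤
      ENNReal.ofReal (40 * (1 + (((n - q.1 : ℤ) : ℝ) / q.2) ^ 2)⁻¹) := by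
  have hm : (0 : ℝ) < q.2 := mod_cast hq
  set x := ((n - q.1 : ℤ) : ℝ) / q.2 with hx
  rcases le_or_gt (2 * q.2 : ℤ) |n - q.1| with hfar | hnear
  · refine (min_le_right _ _).trans ?_
    have hx₂ : 4 ≤ x ^ 2 := by
      have habs : 2 ≤ |x| := by
        rw [hx, abs_div, Nat.abs_cast, le_div_iff₀ hm]
        exact_mod_cast hfar
      nlinarith [sq_abs x]
    rw [← ofReal_norm, ← ENNReal.ofReal_div_of_pos (by positivity)]
    refine ENNReal.ofReal_le_ofReal ?_
    rw [div_le_iff₀ (by positivity)]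
    refine (hβ.norm_sum_mul_arcCoef_le ha hab hb hq hfar).trans ?_
    rw [← hx, ← div_eq_mul_inv, div_mul_div_comm, div_le_div_iff₀ (by positivity) (by positivity)]
    nlinarith
  · refine (min_le_left _ _).trans ?_
    have hx₂ : x ^ 2 ≤ 4 := by
      have habs : |x| ≤ 2 := by
        rw [hx, abs_div, Nat.abs_cast, div_le_iff₀ hm]
        exact_mod_cast hnear.le
      nlinarith [sq_abs x, abs_nonneg x]
    rw [ENNReal.one_le_ofReal, ← div_eq_mul_inv, le_div_iff₀ (by positivity)]
    linarith

lemma sum_range_inv_one_add_div_sq_le {m : ℝ} (hm : 0 < m) (N : ℕ) :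
    ∑ i ∈ Finset.range N, (1 + (((i + 1 : ℕ) : ℝ) / m) ^ 2)⁻¹ ≤ m * (π / 2) := by
  have hanti : AntitoneOn (fun x : ℝ => (1 + (x / m) ^ 2)⁻¹) (Icc 0 (0 + N)) := by
    intro x hx y _ hxy
    have := hx.1
    dsimp only
    gcongr
  have hsum := hanti.sum_le_integral
  rw [intervalIntegral.integral_comp_div (fun x => (1 + x ^ 2)⁻¹) hm.ne',
    integral_inv_one_add_sq, smul_eq_mul] at hsum
  simp only [zero_add, zero_div, arctan_zero, sub_zero] at hsum
  exact hsum.trans (by gcongr; exact (arctan_lt_pi_div_two _).le)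

lemma tsum_ofReal_inv_one_add_div_sq_le {m : ℕ} (hm : 0 < m) :
    ∑' n : ℤ, ENNReal.ofReal (1 + ((n : ℝ) / m) ^ 2)⁻¹ ≤ 5 * m := by
  have hm' : (1 : ℝ) ≤ m := mod_cast hm
  have hhalf : ∑' i : ℕ, ENNReal.ofReal (1 + (((i + 1 : ℕ) : ℝ) / m) ^ 2)⁻¹ ≤
      ENNReal.ofReal (2 * m) := by
    refine ENNReal.tsum_le_of_sum_range_le fun N => ?_
    rw [← ENNReal.ofReal_sum_of_nonneg fun _ _ => by positivity]
    refine ENNReal.ofReal_le_ofReal ?_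
    refine (sum_range_inv_one_add_div_sq_le (by positivity) N).trans ?_
    nlinarith [pi_le_four]
  rw [tsum_of_add_one_of_neg_add_one ENNReal.summable ENNReal.summable]
  calc _ ≤ ENNReal.ofReal (2 * m) + 1 + ENNReal.ofReal (2 * m) := by
        refine add_le_add (add_le_add ?_ ?_) ?_
        · simpa using hhalf
        · simp
        · refine le_trans (le_of_eq (tsum_congr fun i => ?_)) hhalf
          push_cast
          rw [neg_div, neg_sq]
    _ ≤ 5 * m := by
        rw [← ENNReal.ofReal_one, ← ENNReal.ofReal_add (by positivity) zero_le_one,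
          ← ENNReal.ofReal_add (by positivity) (by positivity), ← ENNReal.ofReal_ofNat,
          ← ENNReal.ofReal_natCast, ← ENNReal.ofReal_mul (by positivity)]
        exact ENNReal.ofReal_le_ofReal (by linarith)

lemma IsCancellingAtom.tsum_min_one_le {a b lam : ℝ} {q : ℤ × ℕ} {β : ℤ → ℂ}
    (hβ : IsCancellingAtom (Circle.exp (-a)) (Circle.exp (-b)) (16 * lam) q β) (hlam : 0 < lam)
    (ha : 0 ≤ a) (hab : a ≤ b) (hb : b ≤ 2 * π) (hq : 0 < q.2) :
    ∑' n, min 1 (‖∑ k ∈ intBlock q, β k * arcCoef a b (n - k)‖ₑ / ENNReal.ofReal (lam / 2)) ≤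
      200 * q.2 := by
  calc _ ≤ ∑' n : ℤ, 40 * ENNReal.ofReal (1 + (((n - q.1 : ℤ) : ℝ) / q.2) ^ 2)⁻¹ := by
        refine ENNReal.tsum_le_tsum fun n => ?_
        refine (hβ.min_one_enorm_sum_mul_arcCoef_le hlam ha hab hb hq n).trans_eq ?_
        rw [ENNReal.ofReal_mul (by norm_num), ENNReal.ofReal_ofNat]
    _ = 40 * ∑' n : ℤ, ENNReal.ofReal (1 + ((n : ℝ) / q.2) ^ 2)⁻¹ := by
        rw [ENNReal.tsum_mul_left]
        congr 1
        exact (Equiv.subRight q.1).tsum_eq fun n : ℤ => ENNReal.ofReal (1 + ((n : ℝ) / q.2) ^ 2)⁻¹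
    _ ≤ 40 * (5 * q.2) := by
        gcongr
        exact tsum_ofReal_inv_one_add_div_sq_le hq
    _ = 200 * q.2 := by
        rw [← mul_assoc]
        norm_num

end AtomTails

section WeakType

lemma min_one_add_le (u v : ℝ≥0∞) : min 1 (u + v) ≤ min 1 u + min 1 v := by
  rcases le_total 1 u with hu | hu
  · exact (min_le_left _ _).trans ((min_eq_left hu).ge.trans le_self_add)
  rcases le_total 1 v with hv | hv
  · exact (min_le_left _ _).trans ((min_eq_left hv).ge.trans le_add_self)
  rw [min_eq_right hu, min_eq_right hv]
  exact min_le_right _ _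

lemma min_one_enorm_sum_div_le {ι E : Type*} [NormedAddCommGroup E] (s : Finset ι)
    (x : ι → E) (c : ℝ≥0∞) : min 1 (‖∑ i ∈ s, x i‖ₑ / c) ≤ ∑ i ∈ s, min 1 (‖x i‖ₑ / c) := by
  refine Finset.le_sum_of_subadditive (fun x : E => min 1 (‖x‖ₑ / c)) (by simp) (fun x y => ?_) s x
  calc min 1 (‖x + y‖ₑ / c)
      ≤ min 1 (‖x‖ₑ / c + ‖y‖ₑ / c) := by
        rw [← ENNReal.add_div]
        gcongr
        exact enorm_add_le x y
    _ ≤ min 1 (‖x‖ₑ / c) + min 1 (‖y‖ₑ / c) := min_one_add_le _ _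

lemma exists_good_add_bad {f : ℝ → ℂ} {a b lam : ℝ} (ha : 0 ≤ a) (hab : a ≤ b) (hb : b ≤ 2 * π)
    (hf : IntegrableOn f (Ioc 0 (2 * π)))
    (hfab : f =ᵐ[volume.restrict (Ioc 0 (2 * π))] (Ioc a b).indicator f) (hlam : 0 < lam) :
    ∃ (G : ℝ → ℂ) (w : ℤ → ℂ), IntegrableOn G (Ioc 0 (2 * π)) ∧
      (∀ n, fourierCoef f n = fourierCoef ((Ioc a b).indicator G) n + w n) ∧
      ∑' n, ‖fourierCoef G n‖ₑ ^ 2 ≤ ENNReal.ofReal (641 * lam ^ 2) * czEnergy lam (fourierCoef f) ∧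
      ∑' n, min 1 (‖w n‖ₑ / ENNReal.ofReal (lam / 2)) ≤ 800 * czEnergy lam (fourierCoef f) := by
  obtain ⟨B, β, hatom, hcard, hsq⟩ := exists_atomic_decomposition (Circle.exp (-a))
    (Circle.exp (-b)) (tendsto_fourierCoef_cofinite f) hlam
  set P : ℝ → ℂ := fun t => ∑ q ∈ B, trigPoly (intBlock q) (β q) t with hP
  have hPint : IntegrableOn P (Ioc 0 (2 * π)) :=
    integrable_finsetSum B fun q _ => integrableOn_trigPoly _ _
  have hfP : IntegrableOn (fun t => f t - P t) (Ioc 0 (2 * π)) := hf.sub hPint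
  refine ⟨fun t => f t - P t, fourierCoef ((Ioc a b).indicator P), hfP, fun n => ?_, ?_, ?_⟩
  · rw [fourierCoef_congr_ae hfab, ← sub_eq_iff_eq_add,
      ← fourierCoef_sub (hf.indicator measurableSet_Ioc) (hPint.indicator measurableSet_Ioc)]
    congr 1 with t
    exact (congrFun (indicator_sub (Ioc a b) f P) t).symm
  · refine le_of_eq_of_le (tsum_congr fun n => ?_) hsq
    rw [fourierCoef_sub hf hPint, fourierCoef_sum fun q _ => integrableOn_trigPoly _ _]
    simp only [Finset.sum_congr rfl fun q hq => fourierCoef_trigPoly (hatom q hq).2.eq_zero n]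
  · calc _ ≤ ∑' n, ∑ q ∈ B, min 1 (‖∑ k ∈ intBlock q, β q k * arcCoef a b (n - k)‖ₑ /
            ENNReal.ofReal (lam / 2)) :=
          ENNReal.tsum_le_tsum fun n => by
            rw [hP, fourierCoef_indicator_Ioc_sum_trigPoly]
            exact min_one_enorm_sum_div_le _ _ _
      _ = ∑ q ∈ B, ∑' n, min 1 (‖∑ k ∈ intBlock q, β q k * arcCoef a b (n - k)‖ₑ /
            ENNReal.ofReal (lam / 2)) := Summable.tsum_finsetSum fun _ _ => ENNReal.summable
      _ ≤ ∑ q ∈ B, 200 * (q.2 : ℝ≥0∞) := Finset.sum_le_sum fun q hq =>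
          (hatom q hq).2.tsum_min_one_le hlam ha hab hb (hatom q hq).1
      _ ≤ 200 * (4 * czEnergy lam (fourierCoef f)) := by
          rw [← Finset.mul_sum]
          gcongr
      _ = 800 * czEnergy lam (fourierCoef f) := by
          rw [← mul_assoc]
          norm_num

lemma one_le_of_lt_norm_add {E : Type*} [NormedAddCommGroup E] {x y : E} {lam : ℝ}
    (hlam : 0 < lam) (h : lam < ‖x + y‖) :
    1 ≤ ENNReal.ofReal (4 / lam ^ 2) * ‖x‖ₑ ^ 2 + min 1 (‖y‖ₑ / ENNReal.ofReal (lam / 2)) := by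
  rcases le_or_gt (lam / 2) ‖y‖ with hy | hy
  · refine le_add_left (le_min le_rfl ?_)
    rw [← ofReal_norm, ← ENNReal.ofReal_div_of_pos (by positivity), ENNReal.one_le_ofReal,
      one_le_div (by positivity)]
    exact hy
  · refine le_add_right ?_
    have hx : lam / 2 ≤ ‖x‖ := by linarith [norm_add_le x y]
    rw [← ofReal_norm, ← ENNReal.ofReal_pow (norm_nonneg x), ← ENNReal.ofReal_mul (by positivity),
      ENNReal.one_le_ofReal, div_mul_eq_mul_div, one_le_div (by positivity)]
    nlinarith

lemma count_lt_norm_add_le {ι E : Type*} [Countable ι] [MeasurableSpace ι]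
    [MeasurableSingletonClass ι] [NormedAddCommGroup E] (x y : ι → E) {lam : ℝ} (hlam : 0 < lam) :
    Measure.count {n | lam < ‖x n + y n‖} ≤ ENNReal.ofReal (4 / lam ^ 2) * ∑' n, ‖x n‖ₑ ^ 2 +
      ∑' n, min 1 (‖y n‖ₑ / ENNReal.ofReal (lam / 2)) := by
  rw [← ENNReal.tsum_mul_left, ← ENNReal.tsum_add, ← lintegral_count]
  refine (measure_mono fun n hn => ?_).trans ((one_mul _).symm.le.trans
    (mul_meas_ge_le_lintegral (measurable_of_countable _) 1))
  exact one_le_of_lt_norm_add hlam hn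

theorem count_lt_norm_fourierCoef_sum_le {ι : Type*} [Fintype ι] {a b : ι → ℝ} {f : ι → ℝ → ℂ}
    (ha : ∀ ν, 0 ≤ a ν) (hab : ∀ ν, a ν ≤ b ν) (hb : ∀ ν, b ν ≤ 2 * π)
    (hdisj : Pairwise fun ν μ => Disjoint (Ioc (a ν) (b ν)) (Ioc (a μ) (b μ)))
    (hf : ∀ ν, IntegrableOn (f ν) (Ioc 0 (2 * π)))
    (hfab : ∀ ν, f ν =ᵐ[volume.restrict (Ioc 0 (2 * π))] (Ioc (a ν) (b ν)).indicator (f ν))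
    {lam : ℝ} (hlam : 0 < lam) :
    Measure.count {n : ℤ | lam < ‖fourierCoef (fun t => ∑ ν, f ν t) n‖} ≤
      3364 * ∑ ν, czEnergy lam (fourierCoef (f ν)) := by
  choose G w hG hGw hGsq hw using fun ν =>
    exists_good_add_bad (ha ν) (hab ν) (hb ν) (hf ν) (hfab ν) hlam
  set A : ℤ → ℂ := fourierCoef fun t => ∑ ν, (Ioc (a ν) (b ν)).indicator (G ν) t
  have hsplit (n : ℤ) : fourierCoef (fun t => ∑ ν, f ν t) n = A n + ∑ ν, w ν n := by
    have hAn : A n = ∑ ν, fourierCoef ((Ioc (a ν) (b ν)).indicator (G ν)) n :=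
      fourierCoef_sum (fun ν _ => (hG ν).indicator measurableSet_Ioc) n
    rw [fourierCoef_sum fun ν _ => hf ν, hAn, ← Finset.sum_add_distrib]
    exact Finset.sum_congr rfl fun ν _ => hGw ν n
  have hA : ENNReal.ofReal (4 / lam ^ 2) * ∑' n, ‖A n‖ₑ ^ 2 ≤
      2564 * ∑ ν, czEnergy lam (fourierCoef (f ν)) := by
    calc _ ≤ ENNReal.ofReal (4 / lam ^ 2) *
          ∑ ν, ENNReal.ofReal (641 * lam ^ 2) * czEnergy lam (fourierCoef (f ν)) := by
          gcongr
          exact (tsum_enorm_sq_fourierCoef_sum_indicator_le (fun ν => measurableSet_Ioc) hdisj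
            hG).trans (Finset.sum_le_sum fun ν _ => hGsq ν)
      _ = 2564 * ∑ ν, czEnergy lam (fourierCoef (f ν)) := by
          rw [← Finset.mul_sum, ← mul_assoc, ← ENNReal.ofReal_mul (by positivity),
            ← ENNReal.ofReal_ofNat 2564]
          congr 2
          field_simp
          norm_num
  have hW : ∑' n, min 1 (‖∑ ν, w ν n‖ₑ / ENNReal.ofReal (lam / 2)) ≤
      800 * ∑ ν, czEnergy lam (fourierCoef (f ν)) := by
    refine (ENNReal.tsum_le_tsum fun n => min_one_enorm_sum_div_le _ _ _).trans ?_
    rw [Summable.tsum_finsetSum fun _ _ => ENNReal.summable, Finset.mul_sum]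
    exact Finset.sum_le_sum fun ν _ => hw ν
  simp only [hsplit]
  calc Measure.count {n : ℤ | lam < ‖A n + ∑ ν, w ν n‖}
      ≤ 2564 * ∑ ν, czEnergy lam (fourierCoef (f ν)) +
          800 * ∑ ν, czEnergy lam (fourierCoef (f ν)) :=
        (count_lt_norm_add_le _ _ hlam).trans (add_le_add hA hW)
    _ = 3364 * ∑ ν, czEnergy lam (fourierCoef (f ν)) := by
        rw [← add_mul]
        norm_num

end WeakType

section Interpolation

lemma setLIntegral_Ioi_rpow {s r : ℝ} (hs : 0 < s) (hr : r < -1) :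
    ∫⁻ t in Ioi s, ENNReal.ofReal (t ^ r) = ENNReal.ofReal (-s ^ (r + 1) / (r + 1)) := by
  rw [← integral_Ioi_rpow_of_lt hr hs, ofReal_integral_eq_lintegral_ofReal
    (integrableOn_Ioi_rpow_of_lt hr hs)]
  exact (ae_restrict_mem measurableSet_Ioi).mono fun t ht => rpow_nonneg (hs.trans ht).le r

lemma setLIntegral_Ioc_rpow {s r : ℝ} (hs : 0 ≤ s) (hr : -1 < r) :
    ∫⁻ t in Ioc 0 s, ENNReal.ofReal (t ^ r) = ENNReal.ofReal (s ^ (r + 1) / (r + 1)) := by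
  have hint := intervalIntegral.intervalIntegrable_rpow' (a := 0) (b := s) hr
  rw [← ofReal_integral_eq_lintegral_ofReal
    ((intervalIntegrable_iff_integrableOn_Ioc_of_le hs).1 hint),
    ← intervalIntegral.integral_of_le hs, integral_rpow (Or.inl hr),
    zero_rpow (by linarith), sub_zero]
  exact (ae_restrict_mem measurableSet_Ioc).mono fun t ht => rpow_nonneg ht.1.le r

variable {p s : ℝ}

lemma setLIntegral_Ioc_linQuad_div_mul_rpow (hp : 1 < p) (hs : 0 < s) :
    ∫⁻ t in Ioc 0 s, ENNReal.ofReal (linQuad (s / t)) * ENNReal.ofReal (t ^ (p - 1)) =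
      ENNReal.ofReal (s ^ p / (p - 1)) := by
  calc _ = ∫⁻ t in Ioc 0 s, ENNReal.ofReal s * ENNReal.ofReal (t ^ (p - 2)) := by
        refine setLIntegral_congr_fun measurableSet_Ioc fun t ht => ?_
        have ht₀ := ht.1
        rw [linQuad_of_one_le ((one_le_div ht₀).2 ht.2), ← ENNReal.ofReal_mul (by positivity),
          ← ENNReal.ofReal_mul hs.le, div_mul_eq_mul_div, mul_div_assoc, ← rpow_sub_one ht₀.ne']
        ring_nf
    _ = ENNReal.ofReal (s ^ p / (p - 1)) := by
        rw [lintegral_const_mul' _ _ ENNReal.ofReal_ne_top,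
          setLIntegral_Ioc_rpow hs.le (by linarith), ← ENNReal.ofReal_mul hs.le,
          ← mul_div_assoc, ← rpow_one_add' hs.le (by linarith)]
        ring_nf

lemma setLIntegral_Ioi_self_linQuad_div_mul_rpow (hp : p < 2) (hs : 0 < s) :
    ∫⁻ t in Ioi s, ENNReal.ofReal (linQuad (s / t)) * ENNReal.ofReal (t ^ (p - 1)) =
      ENNReal.ofReal (s ^ p / (2 - p)) := by
  calc _ = ∫⁻ t in Ioi s, ENNReal.ofReal (s ^ 2) * ENNReal.ofReal (t ^ (p - 3)) := by
        refine setLIntegral_congr_fun measurableSet_Ioi fun t ht => ?_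
        have ht₀ : 0 < t := hs.trans ht
        rw [linQuad_of_le_one (by positivity) ((div_le_one ht₀).2 (le_of_lt ht)),
          ← ENNReal.ofReal_mul (by positivity), ← ENNReal.ofReal_mul (by positivity), div_pow,
          div_mul_eq_mul_div, mul_div_assoc, ← rpow_sub_natCast ht₀.ne', sub_sub]
        norm_num
    _ = ENNReal.ofReal (s ^ p / (2 - p)) := by
        have hadd : s ^ 2 * s ^ (p - 3 + 1) = s ^ p := by
          rw [← rpow_natCast, ← rpow_add hs]
          congr 1
          push_cast
          ring
        rw [lintegral_const_mul' _ _ ENNReal.ofReal_ne_top,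
          setLIntegral_Ioi_rpow hs (by linarith), ← ENNReal.ofReal_mul (by positivity),
          ← neg_div_neg_eq, neg_neg, ← mul_div_assoc, hadd]
        ring_nf

lemma setLIntegral_Ioi_zero_linQuad_div_mul_rpow (hp₁ : 1 < p) (hp₂ : p < 2) (hs : 0 ≤ s) :
    ∫⁻ t in Ioi 0, ENNReal.ofReal (linQuad (s / t)) * ENNReal.ofReal (t ^ (p - 1)) =
      ENNReal.ofReal (1 / ((p - 1) * (2 - p))) * ENNReal.ofReal s ^ p := by
  have hp₁' : 0 < p - 1 := sub_pos.2 hp₁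
  have hp₂' : 0 < 2 - p := sub_pos.2 hp₂
  rcases hs.eq_or_lt with rfl | hs
  · simp [linQuad, one_pos.trans hp₁]
  rw [← Ioc_union_Ioi_eq_Ioi hs.le, lintegral_union measurableSet_Ioi (Ioc_disjoint_Ioi le_rfl),
    setLIntegral_Ioc_linQuad_div_mul_rpow hp₁ hs,
    setLIntegral_Ioi_self_linQuad_div_mul_rpow hp₂ hs,
    ← ENNReal.ofReal_add (by positivity) (by positivity),
    ENNReal.ofReal_rpow_of_nonneg hs.le (by positivity), ← ENNReal.ofReal_mul (by positivity)]
  congr 1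
  field_simp
  ring

variable {α β E F : Type*} [MeasurableSpace α] [MeasurableSpace β] [NormedAddCommGroup E]
  [NormedAddCommGroup F] {μ : Measure α} {ν : Measure β} {f : α → E} {g : β → F}

lemma setLIntegral_Ioi_lintegral_linQuad_mul_rpow [SFinite ν] (hg : AEStronglyMeasurable g ν)
    (hp₁ : 1 < p) (hp₂ : p < 2) :
    ∫⁻ t in Ioi 0, (∫⁻ y, ENNReal.ofReal (linQuad (‖g y‖ / t)) ∂ν) * ENNReal.ofReal (t ^ (p - 1)) =
      ENNReal.ofReal (1 / ((p - 1) * (2 - p))) * ∫⁻ y, ‖g y‖ₑ ^ p ∂ν := by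
  have hmeas : AEMeasurable (Function.uncurry fun (t : ℝ) (y : β) =>
      ENNReal.ofReal (linQuad (‖g y‖ / t)) * ENNReal.ofReal (t ^ (p - 1)))
      ((volume.restrict (Ioi 0)).prod ν) := by
    have := hg.norm.aemeasurable.comp_snd (μ := volume.restrict (Ioi (0 : ℝ)))
    unfold linQuad
    fun_prop
  simp only [← lintegral_mul_const' _ _ ENNReal.ofReal_ne_top]
  rw [lintegral_lintegral_swap hmeas]
  simp only [setLIntegral_Ioi_zero_linQuad_div_mul_rpow hp₁ hp₂ (norm_nonneg _), ofReal_norm]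
  exact lintegral_const_mul' _ _ ENNReal.ofReal_ne_top

theorem lintegral_enorm_rpow_le_of_forall_meas_lt_norm_le [SFinite ν]
    (hf : AEStronglyMeasurable f μ) (hg : AEStronglyMeasurable g ν)
    (h : ∀ t > 0, μ {x | t < ‖f x‖} ≤ ∫⁻ y, ENNReal.ofReal (linQuad (‖g y‖ / t)) ∂ν)
    (hp₁ : 1 < p) (hp₂ : p < 2) :
    ∫⁻ x, ‖f x‖ₑ ^ p ∂μ ≤ ENNReal.ofReal (p / ((p - 1) * (2 - p))) * ∫⁻ y, ‖g y‖ₑ ^ p ∂ν := by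
  have hp₀ : 0 < p := one_pos.trans hp₁
  calc ∫⁻ x, ‖f x‖ₑ ^ p ∂μ = ∫⁻ x, ENNReal.ofReal (‖f x‖ ^ p) ∂μ := by
        simp only [← ENNReal.ofReal_rpow_of_nonneg (norm_nonneg _) hp₀.le, ofReal_norm]
    _ = ENNReal.ofReal p * ∫⁻ t in Ioi 0, μ {x | t < ‖f x‖} * ENNReal.ofReal (t ^ (p - 1)) :=
        lintegral_rpow_eq_lintegral_meas_lt_mul μ (ae_of_all _ fun x => norm_nonneg (f x))
          hf.norm.aemeasurable hp₀
    _ ≤ ENNReal.ofReal p * ∫⁻ t in Ioi 0, (∫⁻ y, ENNReal.ofReal (linQuad (‖g y‖ / t)) ∂ν) *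
          ENNReal.ofReal (t ^ (p - 1)) := by
        gcongr ENNReal.ofReal p * ?_
        refine setLIntegral_mono' measurableSet_Ioi fun t ht => ?_
        gcongr
        exact h t ht
    _ = ENNReal.ofReal (p / ((p - 1) * (2 - p))) * ∫⁻ y, ‖g y‖ₑ ^ p ∂ν := by
        rw [setLIntegral_Ioi_lintegral_linQuad_mul_rpow hg hp₁ hp₂, ← mul_assoc,
          ← ENNReal.ofReal_mul hp₀.le, mul_one_div]

end Interpolation

section StrongType

theorem tsum_enorm_rpow_fourierCoef_sum_le {ι : Type*} [Fintype ι] {a b : ι → ℝ} {f : ι → ℝ → ℂ}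
    (ha : ∀ ν, 0 ≤ a ν) (hab : ∀ ν, a ν ≤ b ν) (hb : ∀ ν, b ν ≤ 2 * π)
    (hdisj : Pairwise fun ν μ => Disjoint (Ioc (a ν) (b ν)) (Ioc (a μ) (b μ)))
    (hf : ∀ ν, IntegrableOn (f ν) (Ioc 0 (2 * π)))
    (hfab : ∀ ν, f ν =ᵐ[volume.restrict (Ioc 0 (2 * π))] (Ioc (a ν) (b ν)).indicator (f ν))
    {p : ℝ} (hp₁ : 1 < p) (hp₂ : p < 2) :
    ∑' n, ‖fourierCoef (fun t => ∑ ν, f ν t) n‖ₑ ^ p ≤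
      ENNReal.ofReal (3364 * (p / ((p - 1) * (2 - p)))) *
        ∑ ν, ∑' n, ‖fourierCoef (f ν) n‖ₑ ^ p := by
  let _ : MeasurableSpace ι := ⊤
  have hsum (Φ : ι × ℤ → ℝ≥0∞) : ∫⁻ x, Φ x ∂((3364 : ℝ≥0∞) • Measure.count) =
      3364 * ∑ ν, ∑' n, Φ (ν, n) := by
    rw [lintegral_smul_measure, lintegral_count, ENNReal.tsum_prod (f := fun ν n => Φ (ν, n)),
      tsum_fintype, smul_eq_mul]
  have hstrong := lintegral_enorm_rpow_le_of_forall_meas_lt_norm_le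
    (μ := Measure.count) (ν := (3364 : ℝ≥0∞) • Measure.count)
    (f := fourierCoef fun t => ∑ ν, f ν t) (g := fun x : ι × ℤ => fourierCoef (f x.1) x.2)
    (measurable_of_countable _).aestronglyMeasurable
    (measurable_of_countable _).aestronglyMeasurable (fun t ht => by
      rw [hsum]
      exact count_lt_norm_fourierCoef_sum_le ha hab hb hdisj hf hfab ht) hp₁ hp₂
  rw [hsum, lintegral_count, ← mul_assoc] at hstrong
  rwa [ENNReal.ofReal_mul (by norm_num), ENNReal.ofReal_ofNat, mul_comm 3364]

lemma ApNorm_rpow {p : ℝ} (hp : p ≠ 0) (f : ℝ → ℂ) :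
    ApNorm p f ^ p = ∑' k, ‖fourierCoef f k‖ₑ ^ p := by
  rw [ApNorm, ← ENNReal.rpow_mul, one_div_mul_cancel hp, ENNReal.rpow_one]
  rfl

lemma ae_eq_indicator_Ioc {E : Type*} [Zero E] {f : ℝ → E} {a b c d : ℝ}
    (h : ∀ᵐ t ∂volume.restrict (Ico c d), t ∉ Icc a b → f t = 0) :
    f =ᵐ[volume.restrict (Ioc c d)] (Ioc a b).indicator f := by
  rw [← Measure.restrict_congr_set (Ico_ae_eq_Ioc (μ := volume) (a := c) (b := d))]
  filter_upwards [h, ae_restrict_of_ae (Ioc_ae_eq_Icc (μ := volume) (a := a) (b := b)).mem_iff]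
    with t ht hiff
  by_cases hmem : t ∈ Ioc a b
  · rw [indicator_of_mem hmem]
  · rw [indicator_of_notMem hmem, ht (mt hiff.2 hmem)]

end StrongType

/-- Lemma 6, consequence of the Rubio de Francia inequality:
for pairwise-disjoint intervals Δ_ν ⊂ 𝕋 and f_ν ∈ A_p(𝕋) with supp f_ν ⊆ Δ_ν,
‖Σ f_ν‖_{A_p}^p ≤ c_p·Σ ‖f_ν‖_{A_p}^p. -/
theorem statement11
    (p : ℝ) (hp1 : 1 < p) (hp2 : p < 2) :
    ∃ c : ℝ, 0 < c ∧
      ∀ (N : ℕ) (a b : Fin N → ℝ) (f : Fin N → ℝ → ℂ),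
        (∀ ν, a ν ≤ b ν) →
        (∀ ν, Icc (a ν) (b ν) ⊆ Ico 0 (2 * Real.pi)) →
        (∀ ν μ, ν ≠ μ → Disjoint (Icc (a ν) (b ν)) (Icc (a μ) (b μ))) →
        (∀ ν, Function.Periodic (f ν) (2 * Real.pi)) →
        (∀ ν, IntervalIntegrable (f ν) volume 0 (2 * Real.pi)) →
        -- supp f_ν ⊆ Δ_ν : f_ν vanishes a.e. outside Δ_ν (within a period)
        (∀ ν, ∀ᵐ t ∂(volume.restrict (Ico 0 (2 * Real.pi))),
          t ∉ Icc (a ν) (b ν) → f ν t = 0) →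
        (∀ ν, ApNorm p (f ν) ≠ ⊤) →
        ApNorm p (fun t => ∑ ν, f ν t) ^ p ≤
          ENNReal.ofReal c * ∑ ν, ApNorm p (f ν) ^ p := by
  have : 0 < p - 1 := sub_pos.2 hp1
  have : 0 < 2 - p := sub_pos.2 hp2
  refine ⟨3364 * (p / ((p - 1) * (2 - p))), by positivity,
    fun N a b f hab hsub hdisj _ hint hsupp _ => ?_⟩
  have ha (ν) : 0 ≤ a ν := (hsub ν (left_mem_Icc.2 (hab ν))).1
  have hb (ν) : b ν ≤ 2 * π := (hsub ν (right_mem_Icc.2 (hab ν))).2.le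
  have hdisj_Ioc : Pairwise fun ν μ => Disjoint (Ioc (a ν) (b ν)) (Ioc (a μ) (b μ)) :=
    fun ν μ hνμ => (hdisj ν μ hνμ).mono Ioc_subset_Icc_self Ioc_subset_Icc_self
  have hf (ν) : IntegrableOn (f ν) (Ioc 0 (2 * π)) :=
    (intervalIntegrable_iff_integrableOn_Ioc_of_le (by positivity)).1 (hint ν)
  simp only [ApNorm_rpow (one_pos.trans hp1).ne']
  exact tsum_enorm_rpow_fourierCoef_sum_le ha hab hb hdisj_Ioc hf
    (fun ν => ae_eq_indicator_Ioc (hsupp ν)) hp1 hp2
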